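/- arXiv:1403.4685 — 3 statements merged into one kernel-verified Lean document; each statement's English description precedes it below -/
import Mathlib

section
/- Let p be a prime, F a field of characteristic p, and r, s positive integers. Suppose the Kronecker product J_r ⊗ J_s is similar over F to the block-diagonal matrix with diagonal blocks J_{λ_1},…,J_{λ_b}, where λ_1 ≥ ⋯ ≥ λ_b > 0. Then the p-part of lcm(r,s) equals the p-part of gcd(λ_1,…,λ_b); equivalently, max(r_p, s_p) = min((λ_1)_p,…,(λ_b)_p). -/
/-!
The sizes of the Jordan blocks of `x = J_r ⊗ J_s` are detected by two properties of the matrix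
algebra that are invariant under similarity and pass to diagonal blocks. Let `q = p ^ k` be the
`p`-part of `lcm r s`.

*Higman's criterion.* Some `P` commuting with `x ^ q` satisfies
`∑ i < q, x ^ i * P * x ^ (q - 1 - i) = 1`. For a Jordan block of size `m` such a `P` exists if and
only if `q ∣ m` (`exists_relTrace_eq_one`, `dvd_of_relTrace_eq_one`). In characteristic `p` the sum
is `(ad x) ^ (q - 1)` applied to `P`, so `x` may be replaced by the nilpotent part of the block
(`relTrace_one_add`), and then the claim is read off from matrix entries. Since `q` divides `r` or
`s`, one of the tensor factors satisfies the criterion; hence so does `x`, through `P ⊗ 1` or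
`1 ⊗ P` corrected by a unit commuting with `x` (`exists_relTrace_kronecker`). Therefore `q` divides
every `λ_i`.

*Traces.* Some matrix commuting with `x ^ q` has nonzero trace. This fails if `p * q` divides all
block sizes (`trace_eq_zero`), and holds for a Jordan block of size not divisible by `p * q`
(`exists_trace_ne_zero`). As `p * q` divides neither `r` nor `s`, and traces are multiplicative for
Kronecker products, it holds for `x`. Therefore `p * q` does not divide every `λ_i`.
-/

open Kronecker

/-- The `m × m` Jordan block with eigenvalue `1`: ones on the main diagonal and the
superdiagonal, zeros elsewhere. -/
def jordanBlock (F : Type*) [Zero F] [One F] (m : ℕ) : Matrix (Fin m) (Fin m) F :=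
  Matrix.of fun i j => if (j : ℕ) = (i : ℕ) ∨ (j : ℕ) = (i : ℕ) + 1 then 1 else 0

/-- The block-diagonal matrix whose diagonal blocks are the Jordan blocks `J_{d i}`, `i : ι`. -/
def jordanBlockDiag (F : Type*) [Field F] {ι : Type} [DecidableEq ι] (d : ι → ℕ) :
    Matrix ((i : ι) × Fin (d i)) ((i : ι) × Fin (d i)) F :=
  Matrix.blockDiagonal' fun i => jordanBlock F (d i)

/-- Similarity of square matrices, possibly indexed by different (finite) types:
both matrices represent the same linear endomorphism up to a linear change of basis. -/
def MatSimilar (F : Type*) [Field F] {n m : Type*} [Fintype n] [Fintype m]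
    (A : Matrix n n F) (B : Matrix m m F) : Prop :=
  ∃ e : (n → F) ≃ₗ[F] (m → F), ∀ v, e (A.mulVec v) = B.mulVec (e v)

/-- The `p`-part of `n`: the largest power of `p` dividing `n`. -/
def pPart (p n : ℕ) : ℕ := p ^ (n.factorization p)

open Finset Matrix

/-! ### The relative trace in characteristic p -/

lemma choose_pow_sub_one_cast {R : Type*} [Ring R] {p : ℕ} (hp : p.Prime) (hR : (p : R) = 0)
    (k i : ℕ) (hi : i < p ^ k) : (((p ^ k - 1).choose i : ℕ) : R) = (-1) ^ i := by
  induction i with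
  | zero => simp
  | succ i ih =>
    have hq : 0 < p ^ k := pow_pos hp.pos k
    have h1 : (p ^ k - 1).choose i + (p ^ k - 1).choose (i + 1) = (p ^ k).choose (i + 1) := by
      conv_rhs => rw [← Nat.sub_add_cancel hq]
      rw [Nat.choose_succ_succ]
    have h2 : p ∣ (p ^ k).choose (i + 1) := hp.dvd_choose_pow (by omega) (by omega)
    have h3 : (((p ^ k).choose (i + 1) : ℕ) : R) = 0 := by
      obtain ⟨c, hc⟩ := h2
      rw [hc]; simp [hR]
    rw [← h1, Nat.cast_add, ih (by omega)] at h3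
    rw [pow_succ, mul_neg_one]
    exact (neg_eq_of_add_eq_zero_right h3).symm

/-- In characteristic `p`, with `q = p ^ k`, both sides are `(x ^ q - y ^ q) / (x - y)`; the proof
expands the right-hand side, since `x - y` need not be cancellable. -/
lemma geom_sum₂_eq_sub_pow {R : Type*} [Ring R] {p : ℕ} (hp : p.Prime) (hR : (p : R) = 0)
    (k : ℕ) {x y : R} (h : Commute x y) :
    ∑ i ∈ range (p ^ k), x ^ i * y ^ (p ^ k - 1 - i) = (x - y) ^ (p ^ k - 1) := by
  have hq : 0 < p ^ k := pow_pos hp.pos k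
  have hs : ((-1 : R)) ^ (p ^ k - 1) = 1 := by
    rw [← choose_pow_sub_one_cast hp hR k _ (by omega)]; simp
  rw [sub_eq_add_neg, (h.neg_right).add_pow, Nat.sub_add_cancel hq]
  refine sum_congr rfl fun i hi => ?_
  have hi' : i < p ^ k := mem_range.1 hi
  rw [choose_pow_sub_one_cast hp hR k i hi', neg_pow y, mul_assoc, mul_assoc,
    ((Commute.neg_one_right _).pow_right i).eq, ← mul_assoc ((-1 : R) ^ _), ← pow_add,
    (by omega : p ^ k - 1 - i + i = p ^ k - 1), hs, one_mul]

/-- For invertible `x`, this is up to the factor `x ^ (q - 1)` the relative trace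
`∑ i < q, x ^ i P x ^ (-i)` from the centralizer of `x ^ q` to the centralizer of `x`. Written with
nonnegative exponents it also makes sense for nilpotent `x`. -/
def relTrace {R : Type*} [Ring R] (q : ℕ) (x P : R) : R :=
  ∑ i ∈ range q, x ^ i * P * x ^ (q - 1 - i)

/-- The sum equals `(ad x) ^ (q - 1)` applied to `P`, and `ad (1 + x) = ad x`. This allows passing
from the unipotent Jordan block to its nilpotent part. -/
lemma relTrace_one_add {R : Type*} [Ring R] {p : ℕ} (hp : p.Prime) (hR : (p : R) = 0)
    (k : ℕ) (x P : R) : relTrace (p ^ k) (1 + x) P = relTrace (p ^ k) x P := by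
  have hE : ((p : ℕ) : Module.End ℤ R) = 0 := by
    ext y
    simp [hR]
  have key : ∀ z : R, relTrace (p ^ k) z P =
      ((LinearMap.mulLeft ℤ z - LinearMap.mulRight ℤ z) ^ (p ^ k - 1) : Module.End ℤ R) P := by
    intro z
    rw [← geom_sum₂_eq_sub_pow hp hE k (LinearMap.commute_mulLeft_right (R := ℤ) z z)]
    simp [relTrace, LinearMap.sum_apply, mul_assoc]
  rw [key, key]
  congr 2
  ext y
  simp [add_mul, mul_add]

/-! ### Shift matrices and a single Jordan block -/

/-- The matrix with ones on the `k`-th superdiagonal, that is, the `k`-th power of the nilpotent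
part of the Jordan block of size `m`. -/
def shift (F : Type*) [Zero F] [One F] (m k : ℕ) : Matrix (Fin m) (Fin m) F :=
  Matrix.of fun i j => if (j : ℕ) = (i : ℕ) + k then 1 else 0

section
variable {F : Type*} [Field F] {m : ℕ}

lemma jordanBlock_eq (m : ℕ) : jordanBlock F m = 1 + shift F m 1 := by
  ext i j
  simp only [jordanBlock, shift, Matrix.of_apply, Matrix.add_apply, Matrix.one_apply, Fin.ext_iff]
  split_ifs <;> first | omega | simp

lemma shift_mul_apply (k : ℕ) (X : Matrix (Fin m) (Fin m) F) (i j : Fin m) :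
    (shift F m k * X) i j = if h : (i : ℕ) + k < m then X ⟨i + k, h⟩ j else 0 := by
  rw [Matrix.mul_apply]
  split_ifs with h
  · rw [Finset.sum_eq_single ⟨i + k, h⟩]
    · simp [shift]
    · intro b _ hb
      have : (b : ℕ) ≠ i + k := fun h' => hb (Fin.ext h')
      simp [shift, this]
    · simp
  · refine sum_eq_zero fun b _ => ?_
    have : (b : ℕ) ≠ i + k := by have := b.2; omega
    simp [shift, this]

lemma mul_shift_apply (k : ℕ) (X : Matrix (Fin m) (Fin m) F) (i j : Fin m) :
    (X * shift F m k) i j =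
      if k ≤ (j : ℕ) then X i ⟨j - k, lt_of_le_of_lt (Nat.sub_le _ _) j.2⟩ else 0 := by
  rw [Matrix.mul_apply]
  split_ifs with h
  · rw [Finset.sum_eq_single ⟨j - k, lt_of_le_of_lt (Nat.sub_le _ _) j.2⟩]
    · have : (j : ℕ) = j - k + k := by omega
      simp [shift, ← this]
    · intro b _ hb
      have : (j : ℕ) ≠ b + k := fun h' => hb (Fin.ext (by simp; omega))
      simp [shift, this]
    · simp
  · refine sum_eq_zero fun b _ => ?_
    have : (j : ℕ) ≠ b + k := by omega
    simp [shift, this]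

lemma shift_one_pow (k : ℕ) : shift F m 1 ^ k = shift F m k := by
  induction k with
  | zero => ext i j; simp [shift, Matrix.one_apply, Fin.ext_iff, eq_comm]
  | succ k ih =>
    ext i j
    rw [pow_succ, ih, mul_shift_apply]
    simp only [shift, Matrix.of_apply]
    split_ifs <;> first | rfl | omega

lemma jordanBlock_pow {p : ℕ} (hp : p.Prime) [CharP F p] (m k : ℕ) :
    jordanBlock F m ^ (p ^ k) = 1 + shift F m (p ^ k) := by
  rcases Nat.eq_zero_or_pos m with rfl | hm
  · exact Subsingleton.elim _ _
  have : Fact p.Prime := ⟨hp⟩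
  have : Nonempty (Fin m) := ⟨⟨0, hm⟩⟩
  rw [jordanBlock_eq, add_pow_char_pow_of_commute _ _ (Commute.one_left _), one_pow, shift_one_pow]

lemma commute_jordanBlock_pow_iff {p : ℕ} (hp : p.Prime) [CharP F p] (k : ℕ)
    (P : Matrix (Fin m) (Fin m) F) :
    Commute P (jordanBlock F m ^ (p ^ k)) ↔ Commute P (shift F m (p ^ k)) := by
  rw [jordanBlock_pow hp]
  constructor
  · intro h
    simpa using h.sub_right (Commute.one_right P)
  · exact fun h => (Commute.one_right P).add_right h

lemma relTrace_jordanBlock {p : ℕ} (hp : p.Prime) [CharP F p] (k : ℕ)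
    (P : Matrix (Fin m) (Fin m) F) :
    relTrace (p ^ k) (jordanBlock F m) P =
      ∑ i ∈ range (p ^ k), shift F m i * P * shift F m (p ^ k - 1 - i) := by
  have hR : ((p : ℕ) : Matrix (Fin m) (Fin m) F) = 0 := by
    ext i j
    simp [Matrix.natCast_apply]
  rw [jordanBlock_eq, relTrace_one_add hp hR]
  simp [relTrace, shift_one_pow]

lemma shift_mul_mul_apply (a c : ℕ) (X : Matrix (Fin m) (Fin m) F) (i j : Fin m) :
    (shift F m a * X * shift F m c) i j =
      if h : c ≤ (j : ℕ) ∧ (i : ℕ) + a < m then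
        X ⟨i + a, h.2⟩ ⟨j - c, lt_of_le_of_lt (Nat.sub_le _ _) j.2⟩ else 0 := by
  rw [mul_shift_apply]
  by_cases h1 : c ≤ (j : ℕ) <;> simp [h1, shift_mul_apply]

/-- If `q = p ^ k` divides `m`, then `J_m` satisfies Higman's criterion for being induced from the
powers of `x ^ q`. -/
lemma exists_relTrace_eq_one {p : ℕ} (hp : p.Prime) [CharP F p] (k : ℕ) (hd : p ^ k ∣ m) :
    ∃ P : Matrix (Fin m) (Fin m) F, Commute P (jordanBlock F m ^ (p ^ k)) ∧
      relTrace (p ^ k) (jordanBlock F m) P = 1 := by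
  simp only [commute_jordanBlock_pow_iff hp, relTrace_jordanBlock hp]
  have hq : 0 < p ^ k := pow_pos hp.pos k
  generalize p ^ k = q at *
  -- `P` sends `e_j` to `e_(j + q - 1)` if `q ∣ j` and to `0` otherwise, so on each basis vector
  -- exactly one of the terms `N ^ i * P * N ^ (q - 1 - i)` is nonzero, and it acts as the identity.
  refine ⟨Matrix.of fun i j => if q ∣ (j : ℕ) ∧ (i : ℕ) = j + (q - 1) then 1 else 0, ?_, ?_⟩
  · ext i j
    rw [mul_shift_apply, shift_mul_apply]
    simp only [Matrix.of_apply]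
    have hj := j.2
    by_cases hjd : q ∣ (j : ℕ)
    · obtain ⟨c, hc⟩ := hd
      obtain ⟨d, hd⟩ := hjd
      have hdc : d < c :=
        lt_of_mul_lt_mul_left (by omega : q * d < q * c) (Nat.zero_le q)
      have hle : q * (d + 1) ≤ q * c := Nat.mul_le_mul_left q hdc
      rw [mul_add, ← hc, ← hd, mul_one] at hle
      have h0 : q ∣ (j : ℕ) := ⟨d, hd⟩
      have h0' : q ∣ (j : ℕ) - q := Nat.dvd_sub h0 dvd_rfl
      have hjq : (j : ℕ) < q → (j : ℕ) = 0 := fun h => Nat.eq_zero_of_dvd_of_lt h0 h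
      simp only [h0, h0', true_and]
      split_ifs <;> first | rfl | omega
    · have h2 : q ≤ (j : ℕ) → ¬ q ∣ (j : ℕ) - q := by
        intro h h'
        exact hjd ((Nat.dvd_sub_iff_left h dvd_rfl).1 h')
      simp only [hjd, false_and, if_false]
      split_ifs with h3 h4 <;> first | rfl | exact absurd h4.1 (h2 h3)
  · ext i j
    rw [Matrix.sum_apply, Matrix.one_apply]
    simp only [shift_mul_mul_apply, Matrix.of_apply]
    have hmod : (j : ℕ) % q < q := Nat.mod_lt _ hq
    rw [Finset.sum_eq_single (q - 1 - (j : ℕ) % q)]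
    · have e1 : q - 1 - (q - 1 - (j : ℕ) % q) = (j : ℕ) % q := by omega
      rw [e1]
      have h1 : (j : ℕ) % q ≤ j := Nat.mod_le _ _
      have h2 : q ∣ (j : ℕ) - (j : ℕ) % q := Nat.dvd_sub_mod _
      by_cases hij : i = j
      · subst hij
        have h3 : (i : ℕ) + (q - 1 - (i : ℕ) % q) < m := by
          obtain ⟨c, hc⟩ := hd
          have hi := i.2
          have h4 : (i : ℕ) / q < c := Nat.div_lt_of_lt_mul (hc ▸ hi)
          have hle : q * ((i : ℕ) / q + 1) ≤ q * c := Nat.mul_le_mul_left q h4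
          rw [mul_add, ← hc, mul_one] at hle
          have := Nat.div_add_mod (i : ℕ) q
          omega
        rw [dif_pos ⟨h1, h3⟩, if_pos ⟨h2, by omega⟩, if_pos rfl]
      · have hij' : (i : ℕ) ≠ j := fun h => hij (Fin.ext h)
        rw [if_neg hij]
        split_ifs with h3 h4 <;> first | rfl | omega
    · intro b hb hne
      have hb' := mem_range.1 hb
      split_ifs with h3 h4
      · exfalso
        have h5 : (j : ℕ) % q = q - 1 - b := by
          obtain ⟨c, hc⟩ := h4.1
          have h6 : (j : ℕ) = q - 1 - b + q * c := by omega
          rw [h6, Nat.add_mul_mod_self_left, Nat.mod_eq_of_lt (by omega)]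
        omega
      · rfl
      · rfl
    · intro h
      exact absurd (mem_range.2 (by omega)) h

/-- The converse: Higman's criterion for a Jordan block forces `q = p ^ k` to divide its size. -/
lemma dvd_of_relTrace_eq_one {p : ℕ} (hp : p.Prime) [CharP F p] (k : ℕ)
    (P : Matrix (Fin m) (Fin m) F) (hc : Commute P (jordanBlock F m ^ (p ^ k)))
    (hP : relTrace (p ^ k) (jordanBlock F m) P = 1) : p ^ k ∣ m := by
  rw [commute_jordanBlock_pow_iff hp] at hc
  rw [relTrace_jordanBlock hp] at hP
  have hq : 0 < p ^ k := pow_pos hp.pos k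
  generalize p ^ k = q at *
  -- The entry `(0, 0)` of `hP` gives the case `a = 0`; commuting with the shift by `q` propagates it
  -- along the diagonal, and the entry `1` can never be pushed out of the matrix.
  have key : ∀ a, ∀ h : a * q < m, ∃ h' : a * q + (q - 1) < m, P ⟨_, h'⟩ ⟨_, h⟩ = 1 := by
    intro a
    induction a with
    | zero =>
      intro h
      have h0 : 0 < m := by omega
      have := congrFun (congrFun hP ⟨0, h0⟩) ⟨0, h0⟩
      rw [Matrix.sum_apply, Finset.sum_eq_single (q - 1), Matrix.one_apply_eq,
        shift_mul_mul_apply] at this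
      · split_ifs at this with h1
        · refine ⟨by have := h1.2; simp at this; omega, ?_⟩
          simpa using this
        · simp at this
      · intro b hb hne
        have hb' := mem_range.1 hb
        rw [shift_mul_mul_apply, dif_neg]
        simp; omega
      · intro h; exact absurd (mem_range.2 (by omega)) h
    | succ a ih =>
      intro h
      have e : (a + 1) * q = a * q + q := by ring
      obtain ⟨h', hv⟩ := ih (by omega)
      have := congrFun (congrFun hc.eq ⟨_, h'⟩) ⟨_, h⟩
      rw [mul_shift_apply, shift_mul_apply, if_pos (by simp; omega)] at this
      simp only [e, Nat.add_sub_cancel, hv] at this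
      split_ifs at this with h1
      · refine ⟨by omega, ?_⟩
        rw [this]
        congr 2; omega
      · simp at this
  rcases Nat.eq_zero_or_pos m with rfl | hm
  · simp
  have h1 := Nat.div_add_mod (m - 1) q
  rw [mul_comm] at h1
  obtain ⟨h2, -⟩ := key ((m - 1) / q) (by omega)
  have h3 := Nat.mod_lt (m - 1) hq
  exact ⟨(m - 1) / q + 1, by rw [mul_add, mul_comm]; omega⟩

/-- The matrix is the projection onto the basis vectors whose index lies in a residue class `c`
modulo `q = p ^ k`. The sizes of the classes `0` and `q - 1` are `⌈m / q⌉` and `⌊m / q⌋`, which are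
consecutive unless `q ∣ m`, so one of them is prime to `p`. -/
lemma exists_trace_ne_zero {p : ℕ} (hp : p.Prime) [CharP F p] (k : ℕ)
    (hd : ¬ p ^ (k + 1) ∣ m) :
    ∃ f : Matrix (Fin m) (Fin m) F, Commute f (jordanBlock F m ^ (p ^ k)) ∧ f.trace ≠ 0 := by
  simp only [commute_jordanBlock_pow_iff hp]
  have hq : 0 < p ^ k := pow_pos hp.pos k
  rw [pow_succ] at hd
  generalize p ^ k = q at *
  let f : ℕ → Matrix (Fin m) (Fin m) F := fun c =>
    Matrix.diagonal fun i => if (i : ℕ) % q = c then 1 else 0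
  have hf : ∀ c, Commute (f c) (shift F m q) := by
    intro c
    ext i j
    simp only [f, Matrix.diagonal_mul, Matrix.mul_diagonal, shift, Matrix.of_apply]
    by_cases h : (j : ℕ) = i + q
    · simp [h]
    · simp [h]
  have ht : ∀ c, (f c).trace = ((Nat.count (fun i => i % q = c) m : ℕ) : F) := by
    intro c
    rw [Matrix.trace_diagonal, Fin.sum_univ_eq_sum_range (fun i => if i % q = c then (1 : F) else 0),
      Nat.count_eq_card_filter_range, Finset.sum_boole]
  have hcount : ∀ c < q, Nat.count (fun i => i % q = c) m = m / q + if c < m % q then 1 else 0 := by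
    intro c hc
    have := Nat.count_modEq_card m hq c
    simpa [Nat.ModEq, Nat.mod_eq_of_lt hc] using this
  by_contra! H
  have h0 := H _ (hf 0)
  have h1 := H _ (hf (q - 1))
  rw [ht, CharP.cast_eq_zero_iff F p] at h0 h1
  rw [hcount _ (by omega)] at h0 h1
  have hlt := Nat.mod_lt m hq
  rw [if_neg (by omega), add_zero] at h1
  by_cases hz : m % q = 0
  · apply hd
    have := Nat.div_add_mod m q
    rw [hz, add_zero] at this
    rw [← this]
    exact mul_dvd_mul_left q h1
  · rw [if_pos (by omega)] at h0
    exact hp.one_lt.ne' (Nat.dvd_one.1 ((Nat.dvd_add_right h1).1 h0))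

/-- The diagonal entries of a matrix commuting with the shift by `q = p ^ k` are `q`-periodic, so
each of their values occurs a multiple of `p` times. -/
lemma trace_eq_zero {p : ℕ} (hp : p.Prime) [CharP F p] (k : ℕ)
    (hd : p ^ (k + 1) ∣ m) (f : Matrix (Fin m) (Fin m) F)
    (hf : Commute f (jordanBlock F m ^ (p ^ k))) : f.trace = 0 := by
  rw [commute_jordanBlock_pow_iff hp] at hf
  have hq : 0 < p ^ k := pow_pos hp.pos k
  obtain ⟨c, rfl⟩ := hd
  have hm : p ^ (k + 1) * c = (p * c) * p ^ k := by ring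
  generalize p ^ k = q at *
  generalize p ^ (k + 1) * c = m at *
  let g : ℕ → F := fun i => if h : i < m then f ⟨i, h⟩ ⟨i, h⟩ else 0
  have hstep : ∀ i, i + q < m → g (i + q) = g i := by
    intro i h
    have := congrFun (congrFun hf.eq ⟨i, by omega⟩) ⟨i + q, h⟩
    rw [mul_shift_apply, shift_mul_apply] at this
    simp only [h, dif_pos, Nat.add_sub_cancel, Nat.le_add_left, if_true] at this
    simp only [g, h, dif_pos, show i < m by omega]
    exact this.symm
  have hmul : ∀ d, d * q ≤ m → ∑ i ∈ range (d * q), g i = d * ∑ i ∈ range q, g i := by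
    have hper : ∀ d i, d * q + i < m → g (d * q + i) = g i := by
      intro d
      induction d with
      | zero => intro i _; simp
      | succ d ih =>
        intro i h
        have e : (d + 1) * q + i = d * q + i + q := by ring
        rw [e] at h ⊢
        rw [hstep _ h, ih _ (by omega)]
    intro d
    induction d with
    | zero => simp
    | succ d ih =>
      intro h
      have e : (d + 1) * q = d * q + q := by ring
      rw [e] at h ⊢
      rw [sum_range_add, ih (by omega), sum_congr rfl fun i hi =>
        hper d i (by have := mem_range.1 hi; omega)]
      push_cast; ring
  have : f.trace = ∑ i ∈ range m, g i := by
    rw [← Fin.sum_univ_eq_sum_range, Matrix.trace]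
    refine sum_congr rfl fun i _ => ?_
    simp [g]
  rw [this]
  conv_lhs => rw [hm]
  rw [hmul _ hm.ge]
  simp

/-! ### Kronecker products -/

lemma isUnit_jordanBlock (m : ℕ) : IsUnit (jordanBlock F m) := by
  rw [jordanBlock_eq]
  refine IsNilpotent.isUnit_one_add ⟨m, ?_⟩
  rw [shift_one_pow]
  ext i j
  have := j.2
  simp only [shift, Matrix.of_apply, Matrix.zero_apply]
  rw [if_neg (by omega)]

lemma kronecker_pow' {n₁ n₂ : Type*} [Fintype n₁] [Fintype n₂] [DecidableEq n₁] [DecidableEq n₂]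
    (A : Matrix n₁ n₁ F) (B : Matrix n₂ n₂ F) (k : ℕ) : (A ⊗ₖ B) ^ k = (A ^ k) ⊗ₖ (B ^ k) := by
  induction k with
  | zero => simp
  | succ k ih => rw [pow_succ, ih, ← mul_kronecker_mul, pow_succ, pow_succ]

lemma commute_kronecker {n₁ n₂ : Type*} [Fintype n₁] [Fintype n₂]
    {A C : Matrix n₁ n₁ F} {B D : Matrix n₂ n₂ F} (h₁ : Commute A C) (h₂ : Commute B D) :
    Commute (A ⊗ₖ B) (C ⊗ₖ D) := by
  rw [Commute, SemiconjBy, ← mul_kronecker_mul, ← mul_kronecker_mul, h₁.eq, h₂.eq]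

lemma relTrace_mul_of_commute {R : Type*} [Ring R] (q : ℕ) {x P : R} {Y : R}
    (hY : Commute Y x) : relTrace q x (P * Y) = relTrace q x P * Y := by
  rw [relTrace, relTrace, sum_mul]
  refine sum_congr rfl fun i _ => ?_
  rw [← mul_assoc, mul_assoc _ Y, (hY.pow_right _).eq, ← mul_assoc]

lemma relTrace_kronecker_one {n₁ n₂ : Type*} [Fintype n₁] [Fintype n₂] [DecidableEq n₁]
    [DecidableEq n₂] (A P : Matrix n₁ n₁ F) (B : Matrix n₂ n₂ F) (q : ℕ) :
    relTrace q (A ⊗ₖ B) (P ⊗ₖ 1) = relTrace q A P ⊗ₖ (B ^ (q - 1)) := by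
  have : ∀ s : Finset ℕ, ∀ g : ℕ → Matrix n₁ n₁ F, ∀ C : Matrix n₂ n₂ F,
      ∑ i ∈ s, ((g i) ⊗ₖ C) = (∑ i ∈ s, g i) ⊗ₖ C := by
    intro s g C
    ext i j
    simp [Matrix.sum_apply, sum_mul]
  rw [relTrace, relTrace, ← this]
  refine sum_congr rfl fun i hi => ?_
  have hi' := mem_range.1 hi
  rw [kronecker_pow', kronecker_pow', ← mul_kronecker_mul, ← mul_kronecker_mul, mul_one, ← pow_add]
  congr 2
  omega

lemma relTrace_one_kronecker {n₁ n₂ : Type*} [Fintype n₁] [Fintype n₂] [DecidableEq n₁]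
    [DecidableEq n₂] (A : Matrix n₁ n₁ F) (B P : Matrix n₂ n₂ F) (q : ℕ) :
    relTrace q (A ⊗ₖ B) (1 ⊗ₖ P) = (A ^ (q - 1)) ⊗ₖ relTrace q B P := by
  have : ∀ s : Finset ℕ, ∀ g : ℕ → Matrix n₂ n₂ F, ∀ C : Matrix n₁ n₁ F,
      ∑ i ∈ s, (C ⊗ₖ (g i)) = C ⊗ₖ (∑ i ∈ s, g i) := by
    intro s g C
    ext i j
    simp [Matrix.sum_apply, mul_sum]
  rw [relTrace, relTrace, ← this]
  refine sum_congr rfl fun i hi => ?_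
  have hi' := mem_range.1 hi
  rw [kronecker_pow', kronecker_pow', ← mul_kronecker_mul, ← mul_kronecker_mul, mul_one, ← pow_add]
  congr 2
  omega

lemma exists_relTrace_eq_one_of_isUnit {R : Type*} [Ring R] (q : ℕ) {x P : R}
    (hP : Commute P (x ^ q)) (hu : IsUnit (relTrace q x P)) (hc : Commute (relTrace q x P) x) :
    ∃ Q : R, Commute Q (x ^ q) ∧ relTrace q x Q = 1 := by
  obtain ⟨u, hu⟩ := hu
  rw [← hu] at hc
  have hc' : Commute (↑u⁻¹ : R) x := hc.units_inv_left
  refine ⟨P * ↑u⁻¹, hP.mul_left (hc'.pow_right q), ?_⟩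
  rw [relTrace_mul_of_commute q hc', ← hu, Units.mul_inv]

lemma isUnit_kronecker {n₁ n₂ : Type*} [Fintype n₁] [Fintype n₂] [DecidableEq n₁]
    [DecidableEq n₂] {A : Matrix n₁ n₁ F} {B : Matrix n₂ n₂ F} (hA : IsUnit A) (hB : IsUnit B) :
    IsUnit (A ⊗ₖ B) := by
  rw [Matrix.isUnit_iff_isUnit_det] at *
  rw [Matrix.det_kronecker]
  exact (hA.pow _).mul (hB.pow _)

lemma exists_relTrace_kronecker {p : ℕ} (hp : p.Prime) [CharP F p] (k r s : ℕ)
    (hd : p ^ k ∣ r ∨ p ^ k ∣ s) :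
    ∃ P, Commute P ((jordanBlock F r ⊗ₖ jordanBlock F s) ^ (p ^ k)) ∧
      relTrace (p ^ k) (jordanBlock F r ⊗ₖ jordanBlock F s) P = 1 := by
  rcases hd with hd | hd
  · obtain ⟨P, hP, hT⟩ := exists_relTrace_eq_one (F := F) hp k hd
    have hT' := relTrace_kronecker_one (jordanBlock F r) P (jordanBlock F s) (p ^ k)
    rw [hT] at hT'
    apply exists_relTrace_eq_one_of_isUnit (P := P ⊗ₖ (1 : Matrix (Fin s) (Fin s) F))
    · rw [kronecker_pow']
      exact commute_kronecker hP (Commute.one_left _)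
    · rw [hT']
      exact isUnit_kronecker isUnit_one ((isUnit_jordanBlock s).pow _)
    · rw [hT']
      exact commute_kronecker (Commute.one_left _) ((Commute.refl _).pow_left _)
  · obtain ⟨P, hP, hT⟩ := exists_relTrace_eq_one (F := F) hp k hd
    have hT' := relTrace_one_kronecker (jordanBlock F r) (jordanBlock F s) P (p ^ k)
    rw [hT] at hT'
    apply exists_relTrace_eq_one_of_isUnit (P := (1 : Matrix (Fin r) (Fin r) F) ⊗ₖ P)
    · rw [kronecker_pow']
      exact commute_kronecker (Commute.one_left _) hP
    · rw [hT']
      exact isUnit_kronecker ((isUnit_jordanBlock r).pow _) isUnit_one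
    · rw [hT']
      exact commute_kronecker ((Commute.refl _).pow_left _) (Commute.one_left _)

lemma exists_trace_kronecker_ne_zero {p : ℕ} (hp : p.Prime) [CharP F p] (k r s : ℕ)
    (hr : ¬ p ^ (k + 1) ∣ r) (hs : ¬ p ^ (k + 1) ∣ s) :
    ∃ f, Commute f ((jordanBlock F r ⊗ₖ jordanBlock F s) ^ (p ^ k)) ∧ f.trace ≠ 0 := by
  obtain ⟨f, hf, hf0⟩ := exists_trace_ne_zero (F := F) hp k hr
  obtain ⟨g, hg, hg0⟩ := exists_trace_ne_zero (F := F) hp k hs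
  refine ⟨f ⊗ₖ g, ?_, ?_⟩
  · rw [kronecker_pow']
    exact commute_kronecker hf hg
  · rw [Matrix.trace_kronecker]
    exact mul_ne_zero hf0 hg0

/-! ### Diagonal blocks -/

section Blocks
variable {b : ℕ} {lam : Fin b → ℕ}

/-- The `i`-th diagonal block of a matrix indexed by a disjoint union. -/
def diagBlock (X : Matrix ((i : Fin b) × Fin (lam i)) ((i : Fin b) × Fin (lam i)) F) (i : Fin b) :
    Matrix (Fin (lam i)) (Fin (lam i)) F := Matrix.of fun a c => X ⟨i, a⟩ ⟨i, c⟩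

lemma jordanBlockDiag_pow (n : ℕ) :
    jordanBlockDiag F lam ^ n = Matrix.blockDiagonal' fun i => jordanBlock F (lam i) ^ n := by
  rw [jordanBlockDiag, ← Matrix.blockDiagonal'_pow]
  rfl

lemma diagBlock_blockDiagonal_mul (D : ∀ i : Fin b, Matrix (Fin (lam i)) (Fin (lam i)) F)
    (X : Matrix ((i : Fin b) × Fin (lam i)) ((i : Fin b) × Fin (lam i)) F) (i : Fin b) :
    diagBlock (Matrix.blockDiagonal' D * X) i = D i * diagBlock X i := by
  ext a c
  simp only [diagBlock, Matrix.of_apply, Matrix.mul_apply, Fintype.sum_sigma]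
  rw [Finset.sum_eq_single i]
  · simp
  · intro j _ hj
    simp [Matrix.blockDiagonal'_apply_ne _ _ _ hj.symm]
  · simp

lemma diagBlock_mul_blockDiagonal (D : ∀ i : Fin b, Matrix (Fin (lam i)) (Fin (lam i)) F)
    (X : Matrix ((i : Fin b) × Fin (lam i)) ((i : Fin b) × Fin (lam i)) F) (i : Fin b) :
    diagBlock (X * Matrix.blockDiagonal' D) i = diagBlock X i * D i := by
  ext a c
  simp only [diagBlock, Matrix.of_apply, Matrix.mul_apply, Fintype.sum_sigma]
  rw [Finset.sum_eq_single i]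
  · simp
  · intro j _ hj
    simp [Matrix.blockDiagonal'_apply_ne _ _ _ hj]
  · simp

lemma commute_diagBlock {n : ℕ}
    {X : Matrix ((i : Fin b) × Fin (lam i)) ((i : Fin b) × Fin (lam i)) F}
    (h : Commute X (jordanBlockDiag F lam ^ n)) (i : Fin b) :
    Commute (diagBlock X i) (jordanBlock F (lam i) ^ n) := by
  rw [jordanBlockDiag_pow] at h
  have := congrArg (fun Y => diagBlock Y i) h.eq
  simp only [diagBlock_mul_blockDiagonal, diagBlock_blockDiagonal_mul] at this
  exact this

lemma relTrace_diagBlock (q : ℕ)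
    (X : Matrix ((i : Fin b) × Fin (lam i)) ((i : Fin b) × Fin (lam i)) F) (i : Fin b) :
    relTrace q (jordanBlock F (lam i)) (diagBlock X i) =
      diagBlock (relTrace q (jordanBlockDiag F lam) X) i := by
  have hsum : ∀ g : ℕ → Matrix ((i : Fin b) × Fin (lam i)) ((i : Fin b) × Fin (lam i)) F,
      diagBlock (∑ n ∈ range q, g n) i = ∑ n ∈ range q, diagBlock (g n) i := by
    intro g
    ext a c
    simp [diagBlock, Matrix.sum_apply]
  rw [relTrace, relTrace, hsum]
  refine sum_congr rfl fun n _ => ?_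
  rw [jordanBlockDiag_pow, jordanBlockDiag_pow, diagBlock_mul_blockDiagonal,
    diagBlock_blockDiagonal_mul]

lemma diagBlock_one (i : Fin b) :
    diagBlock (1 : Matrix ((i : Fin b) × Fin (lam i)) ((i : Fin b) × Fin (lam i)) F) i = 1 := by
  ext a c
  simp [diagBlock, Matrix.one_apply]

lemma trace_eq_sum_diagBlock
    (X : Matrix ((i : Fin b) × Fin (lam i)) ((i : Fin b) × Fin (lam i)) F) :
    X.trace = ∑ i, (diagBlock X i).trace := by
  simp [Matrix.trace, Fintype.sum_sigma, diagBlock]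

end Blocks

/-! ### Similarity and conclusion -/

lemma MatSimilar.exists_algEquiv {n m : Type*} [Fintype n] [Fintype m] [DecidableEq n]
    [DecidableEq m] {A : Matrix n n F} {B : Matrix m m F} (h : MatSimilar F A B) :
    ∃ Φ : Matrix n n F ≃ₐ[F] Matrix m m F, Φ A = B ∧ ∀ X, (Φ X).trace = X.trace := by
  obtain ⟨e, he⟩ := h
  refine ⟨(Matrix.toLinAlgEquiv'.trans (e.conjAlgEquiv F)).trans LinearMap.toMatrixAlgEquiv',
    ?_, ?_⟩
  · apply Matrix.toLinAlgEquiv'.injective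
    refine LinearMap.ext fun v => ?_
    simp [LinearEquiv.conjAlgEquiv_apply, he]
  · intro X
    have h : ((Matrix.toLinAlgEquiv'.trans (e.conjAlgEquiv F)).trans
        LinearMap.toMatrixAlgEquiv') X = LinearMap.toMatrix' (e.conj (Matrix.toLin' X)) := rfl
    rw [h, ← Matrix.trace_toLin'_eq, Matrix.toLin'_toMatrix', LinearMap.trace_conj',
      Matrix.trace_toLin'_eq]

end

/-- The `p`-parts of `lcm(r, s)` and `gcd(λ₁, …, λ_b)` are equal. -/
theorem stmt_0 {F : Type*} [Field F] (p : ℕ) (hp : p.Prime) [CharP F p]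
    (r s : ℕ) (hr : 0 < r) (hs : 0 < s)
    (b : ℕ) (lam : Fin b → ℕ) (hanti : Antitone lam) (hpos : ∀ i, 0 < lam i)
    (hsim : MatSimilar F (jordanBlock F r ⊗ₖ jordanBlock F s) (jordanBlockDiag F lam)) :
    pPart p (Nat.lcm r s) = pPart p (Finset.univ.gcd lam) := by
  obtain ⟨Φ, hΦ, htr⟩ := hsim.exists_algEquiv
  set k := (Nat.lcm r s).factorization p with hk
  have hk' : k = max (r.factorization p) (s.factorization p) := by
    rw [hk, Nat.factorization_lcm hr.ne' hs.ne']; rfl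
  have h1 : p ^ k ∣ r ∨ p ^ k ∣ s := by
    rw [hp.pow_dvd_iff_le_factorization hr.ne', hp.pow_dvd_iff_le_factorization hs.ne']
    omega
  have h2 : ¬ p ^ (k + 1) ∣ r := by
    rw [hp.pow_dvd_iff_le_factorization hr.ne']; omega
  have h3 : ¬ p ^ (k + 1) ∣ s := by
    rw [hp.pow_dvd_iff_le_factorization hs.ne']; omega
  have hdvd : ∀ i, p ^ k ∣ lam i := by
    intro i
    obtain ⟨P, hP, hT⟩ := exists_relTrace_kronecker (F := F) hp k r s h1
    have hP' := hP.map Φ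
    rw [map_pow, hΦ] at hP'
    refine dvd_of_relTrace_eq_one hp k (diagBlock (Φ P) i) (commute_diagBlock hP' i) ?_
    have hT' := congrArg Φ hT
    simp only [relTrace, map_sum, map_mul, map_pow, hΦ, map_one] at hT'
    rw [relTrace_diagBlock, relTrace, hT', diagBlock_one]
  have hndvd : ∃ i, ¬ p ^ (k + 1) ∣ lam i := by
    by_contra! H
    obtain ⟨f, hf, hf0⟩ := exists_trace_kronecker_ne_zero (F := F) hp k r s h2 h3
    have hf' := hf.map Φ
    rw [map_pow, hΦ] at hf'
    apply hf0
    rw [← htr, trace_eq_sum_diagBlock]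
    exact sum_eq_zero fun i _ => trace_eq_zero hp k (H i) _ (commute_diagBlock hf' i)
  obtain ⟨i, hi⟩ := hndvd
  have hg : Finset.univ.gcd lam ∣ lam i := Finset.gcd_dvd (mem_univ i)
  have hg0 : Finset.univ.gcd lam ≠ 0 := ne_zero_of_dvd_ne_zero (hpos i).ne' hg
  have h4 : p ^ k ∣ Finset.univ.gcd lam := Finset.dvd_gcd fun i _ => hdvd i
  have h5 : ¬ p ^ (k + 1) ∣ Finset.univ.gcd lam := fun h => hi (h.trans hg)
  rw [hp.pow_dvd_iff_le_factorization hg0] at h4 h5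
  rw [pPart, pPart, ← hk]
  congr 1
  omega
end

section
/- Let p be a prime, F a field of characteristic p, and r, s positive integers. Suppose the Kronecker product J_r ⊗ J_s is similar over F to the block-diagonal matrix consisting, for each 1 ≤ i ≤ t, of exactly m_i ≥ 1 diagonal blocks equal to J_{μ_i}, where μ_1 > ⋯ > μ_t > 0. Then for every index i with m_i > 1, the prime p divides μ_i. -/
/-!
Put `X = (J_r - 1) ⊗ 1`, `Y = 1 ⊗ (J_s - 1)` and `Z = J_r ⊗ J_s - 1 = X + Y + XY`, acting on
`V = F^r ⊗ F^s`. The multiplicity of `J_l` as a Jordan block of `1 + Z` is the dimension of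
`U = K_l / (K_{l-1} + Z K_{l+1})`, where `K_j = ker Z^j`. Two facts show that it is at most one
when `p ∤ l`.

* *`Y` kills `U`* (`mem_of_ker`). The diagonal operator `D` multiplying the basis vector
  `e_i ⊗ e_j` by `j` satisfies `[D, X] = 0`, `[D, Y] = -Y`, so `[D, Z] = -Y(1 + X)`. Applying `D`
  to `Z^l w = 0` gives `Z^{l-1} (Z D w - l Y (1 + X) w) = 0`; as `l` and `1 + X` are invertible,
  `Y` maps `K_l` into `K_{l-1} + ZV`.
* *`U` is a uniserial `F[Y]`-module.* `V` is cyclic over `F[X, Y]`, and `X` is a polynomial in `Y`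
  modulo `Z`, so `V / ZV` is cyclic over `F[Y]` with `Y` nilpotent (`cyclic_mod`). The spaces
  `K_l / (K_{l-1} + Z K_{l+1})` are the successive quotients of the filtration of `V / ZV` by the
  images of the `K_l`.

Hence any two elements of `K_l` are linearly dependent modulo `K_{l-1} + ZV` (`exists_comb`),
whereas the generators of two Jordan blocks of size `l` are independent there.
-/

open Kronecker

namespace JordanTensor

open Polynomial Module

/-! ### Commuting nilpotent operators -/

section Abstract

variable {F V : Type*} [Field F] [AddCommGroup V] [Module F V]

/-- Divisibility is total among polynomials in a nilpotent operator. -/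
lemma dvd_total_aeval {Y : End F V} (hY : IsNilpotent Y) (f₁ f₂ : F[X]) :
    (∃ g : F[X], aeval Y f₂ = aeval Y (g * f₁)) ∨ (∃ g : F[X], aeval Y f₁ = aeval Y (g * f₂)) := by
  obtain ⟨s, hs⟩ := hY
  -- A nonzero `f` is `X ^ n * u` with `u` invertible modulo `X ^ s`.
  have key : ∀ f : F[X], f ≠ 0 → ∃ (n : ℕ) (u a : F[X]), f = X ^ n * u ∧
      aeval Y a * aeval Y u = 1 := by
    intro f hf
    obtain ⟨u, hu, hnd⟩ := exists_eq_pow_rootMultiplicity_mul_and_not_dvd f hf 0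
    rw [C_0, sub_zero] at hu hnd
    have hc : IsCoprime u (X ^ s) :=
      (((irreducible_X (R := F)).coprime_iff_not_dvd.2 hnd).symm).pow_right
    obtain ⟨a, b, hab⟩ := hc
    refine ⟨_, u, a, hu, ?_⟩
    have := congrArg (aeval Y) hab
    simpa [hs] using this
  by_cases h1 : f₁ = 0
  · exact Or.inr ⟨0, by simp [h1]⟩
  by_cases h2 : f₂ = 0
  · exact Or.inl ⟨0, by simp [h2]⟩
  obtain ⟨n₁, u₁, a₁, rfl, ha₁⟩ := key f₁ h1
  obtain ⟨n₂, u₂, a₂, rfl, ha₂⟩ := key f₂ h2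
  have main : ∀ (n k : ℕ) (u a w : F[X]), aeval Y a * aeval Y u = 1 →
      aeval Y (X ^ (n + k) * w) = aeval Y ((X ^ k * w * a) * (X ^ n * u)) := by
    intro n k u a w h
    rw [show (X ^ k * w * a) * (X ^ n * u) = X ^ (n + k) * w * (a * u) by ring, map_mul _ _ (a * u),
      map_mul _ a, h, mul_one]
  rcases le_total n₁ n₂ with h | h
  · obtain ⟨k, rfl⟩ := Nat.exists_eq_add_of_le h
    exact Or.inl ⟨_, main _ _ _ _ _ ha₁⟩
  · obtain ⟨k, rfl⟩ := Nat.exists_eq_add_of_le h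
    exact Or.inr ⟨_, main _ _ _ _ _ ha₂⟩

/-- If `v` generates `V` under `X` and `Y`, then it generates `V / ZV` under `Y` alone, because
`(1 + Y) X = Z - Y` with `1 + Y` invertible. -/
lemma cyclic_mod {X' Y : End F V} (hXY : Commute X' Y) (hY : IsNilpotent Y) (v : V)
    (hcyc : ∀ S : Submodule F V, v ∈ S → (∀ w ∈ S, X' w ∈ S) → (∀ w ∈ S, Y w ∈ S) → S = ⊤)
    (w : V) : ∃ (f : F[X]) (u : V), w = aeval Y f v + (X' + Y + X' * Y) u := by
  set Z := X' + Y + X' * Y with hZ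
  have hZY : Commute Z Y := by
    rw [hZ]; exact (hXY.add_left (Commute.refl Y)).add_left (hXY.mul_left (Commute.refl Y))
  have hZf : ∀ f : F[X], Commute Z (aeval Y f) := fun f =>
    Algebra.commute_of_mem_adjoin_singleton_of_commute (aeval_mem_adjoin_singleton F Y) hZY
  let S : Submodule F V :=
    { carrier := {w | ∃ (f : F[X]) (u : V), w = aeval Y f v + Z u}
      zero_mem' := ⟨0, 0, by simp⟩
      add_mem' := by
        rintro _ _ ⟨f, u, rfl⟩ ⟨g, t, rfl⟩
        exact ⟨f + g, u + t, by simp only [map_add, LinearMap.add_apply]; abel⟩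
      smul_mem' := by
        rintro c _ ⟨f, u, rfl⟩
        exact ⟨c • f, c • u, by simp⟩ }
  have hSf : ∀ (g : F[X]), ∀ w ∈ S, aeval Y g w ∈ S := by
    rintro g _ ⟨f, u, rfl⟩
    refine ⟨g * f, aeval Y g u, ?_⟩
    rw [map_add, map_mul, ← Module.End.mul_apply, ← Module.End.mul_apply, ← Module.End.mul_apply,
      (hZf g).eq]
  have hSY : ∀ w ∈ S, Y w ∈ S := fun w hw => by simpa using hSf X w hw
  obtain ⟨q, hq⟩ : ∃ q : F[X], aeval Y q * (1 + Y) = 1 := by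
    obtain ⟨s, hs⟩ := hY
    have hc : IsCoprime (1 + X : F[X]) (X ^ s) := IsCoprime.pow_right ⟨1, -1, by ring⟩
    obtain ⟨a, b, hab⟩ := hc
    refine ⟨a, ?_⟩
    have := congrArg (aeval Y) hab
    simpa [hs] using this
  have hS : S = ⊤ := by
    refine hcyc S ⟨1, 0, by simp⟩ ?_ hSY
    intro w hw
    have h1 : Z w - Y w ∈ S := S.sub_mem ⟨0, w, by simp⟩ (hSY w hw)
    have h2 : Z w - Y w = (1 + Y) (X' w) := by
      have : Z - Y = (1 + Y) * X' := by rw [hZ, add_mul, one_mul, ← hXY.eq]; abel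
      rw [← LinearMap.sub_apply, this, Module.End.mul_apply]
    have h3 := hSf q _ h1
    rwa [h2, ← Module.End.mul_apply, hq, Module.End.one_apply] at h3
  have : w ∈ S := hS ▸ Submodule.mem_top
  exact this

/-- `Y` maps `ker Z ^ (n + 1)` into `ker Z ^ n + ZV`, when `n + 1` is invertible in `F`. -/
lemma mem_of_ker {X' Y D : End F V} (hXY : Commute X' Y) (hX : IsNilpotent X')
    (hDX : Commute D X') (hDY : D * Y = Y * D - Y) (n : ℕ) (hn : ((n + 1 : ℕ) : F) ≠ 0)
    (w : V) (hw : ((X' + Y + X' * Y) ^ (n + 1)) w = 0) :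
    ∃ k u : V, ((X' + Y + X' * Y) ^ n) k = 0 ∧ Y w = k + (X' + Y + X' * Y) u := by
  set Z := X' + Y + X' * Y with hZ
  have hZY : Commute Z Y := by
    rw [hZ]; exact (hXY.add_left (Commute.refl Y)).add_left (hXY.mul_left (Commute.refl Y))
  have hZX : Commute Z X' := by
    rw [hZ]
    exact ((Commute.refl X').add_left hXY.symm).add_left ((Commute.refl X').mul_left hXY.symm)
  have hZC : Commute Z (Y * (1 + X')) := hZY.mul_right ((Commute.one_right Z).add_right hZX)
  have hDZ : D * Z = Z * D - Y * (1 + X') := by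
    rw [hZ, mul_add, mul_add, ← mul_assoc, hDX.eq, mul_assoc, hDY, mul_add Y, ← hXY.eq]
    noncomm_ring
  have hDZn : ∀ n : ℕ, D * Z ^ (n + 1) = Z ^ (n + 1) * D - (n + 1) • (Z ^ n * (Y * (1 + X'))) := by
    intro n
    induction n with
    | zero => simp [hDZ]
    | succ n ih =>
      rw [pow_succ Z (n + 1), ← mul_assoc, ih, sub_mul, mul_assoc, hDZ, smul_mul_assoc, mul_assoc,
        ← hZC.eq, mul_sub, ← mul_assoc, ← mul_assoc (Z ^ n), ← pow_succ]
      rw [succ_nsmul _ (n + 1)]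
      abel
  obtain ⟨U, hU⟩ := hX.isUnit_one_add
  have hZU : Commute Z (U : End F V) := by
    rw [hU]; exact (Commute.one_right Z).add_right hZX
  have hZU' : Commute Z (↑U⁻¹ : End F V) := hZU.units_inv_right
  set w' : V := (↑U⁻¹ : End F V) w with hw'
  have hw'0 : (Z ^ (n + 1)) w' = 0 := by
    rw [hw', ← Module.End.mul_apply, (hZU'.pow_left (n + 1)).eq, Module.End.mul_apply, hw, map_zero]
  have hCw : (Y * (1 + X')) w' = Y w := by
    rw [hw', ← hU, ← Module.End.mul_apply, mul_assoc, Units.mul_inv, mul_one]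
  have h := LinearMap.congr_fun (hDZn n) w'
  rw [Module.End.mul_apply, hw'0, map_zero, LinearMap.sub_apply, LinearMap.smul_apply,
    Module.End.mul_apply, Module.End.mul_apply (Z ^ n), hCw, pow_succ, Module.End.mul_apply,
    ← Nat.cast_smul_eq_nsmul F] at h
  refine ⟨Y w - Z ((((n + 1 : ℕ) : F)⁻¹) • D w'), (((n + 1 : ℕ) : F)⁻¹) • D w', ?_, by abel⟩
  rw [map_sub, map_smul, map_smul, sub_eq_zero.1 h.symm, smul_smul, inv_mul_cancel₀ hn, one_smul,
    sub_self]

/-- Any two elements of `ker Z ^ (n + 1)` are linearly dependent modulo `ker Z ^ n + ZV`. -/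
lemma exists_comb {X' Y D : End F V} (hXY : Commute X' Y) (hX : IsNilpotent X')
    (hY : IsNilpotent Y) (hDX : Commute D X') (hDY : D * Y = Y * D - Y) (v : V)
    (hcyc : ∀ S : Submodule F V, v ∈ S → (∀ w ∈ S, X' w ∈ S) → (∀ w ∈ S, Y w ∈ S) → S = ⊤)
    (n : ℕ) (hn : ((n + 1 : ℕ) : F) ≠ 0) (T₁ T₂ : V)
    (h₁ : ((X' + Y + X' * Y) ^ (n + 1)) T₁ = 0) (h₂ : ((X' + Y + X' * Y) ^ (n + 1)) T₂ = 0) :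
    ∃ (a b : F) (k u : V), (a ≠ 0 ∨ b ≠ 0) ∧ ((X' + Y + X' * Y) ^ n) k = 0 ∧
      a • T₁ + b • T₂ = k + (X' + Y + X' * Y) u := by
  have hZY : Commute (X' + Y + X' * Y) Y :=
    (hXY.add_left (Commute.refl Y)).add_left (hXY.mul_left (Commute.refl Y))
  have hZf : ∀ f : F[X], Commute (X' + Y + X' * Y) (aeval Y f) := fun f =>
    Algebra.commute_of_mem_adjoin_singleton_of_commute (aeval_mem_adjoin_singleton F Y) hZY
  -- The asymmetric form: `A ≡ g(Y) B` modulo `Z`, and `g(Y) B` is `g(0) B` plus a multiple of `Y`.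
  have key : ∀ (A B : V) (f₁ f₂ g : F[X]) (u₁ u₂ : V), ((X' + Y + X' * Y) ^ (n + 1)) B = 0 →
      A = aeval Y f₁ v + (X' + Y + X' * Y) u₁ → B = aeval Y f₂ v + (X' + Y + X' * Y) u₂ →
      aeval Y f₁ = aeval Y (g * f₂) → ∃ (c : F) (k u : V), ((X' + Y + X' * Y) ^ n) k = 0 ∧
        A - c • B = k + (X' + Y + X' * Y) u := by
    intro A B f₁ f₂ g u₁ u₂ hB hA hB' hg
    obtain ⟨k, u, hk, hu⟩ := mem_of_ker hXY hX hDX hDY n hn (aeval Y g.divX B) (by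
      rw [← Module.End.mul_apply, ((hZf g.divX).pow_left (n + 1)).eq, Module.End.mul_apply, hB,
        map_zero])
    refine ⟨g.coeff 0, k, u + u₁ - aeval Y g u₂, hk, ?_⟩
    have e1 : aeval Y g B = Y (aeval Y g.divX B) + g.coeff 0 • B := by
      have h := congrArg (fun q => aeval Y q B) (X_mul_divX_add g)
      simp only [map_add, map_mul, aeval_X, aeval_C, LinearMap.add_apply, Module.End.mul_apply,
        Module.algebraMap_end_apply] at h
      exact h.symm
    have e2 : A = aeval Y g B + (X' + Y + X' * Y) (u₁ - aeval Y g u₂) := by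
      rw [hA, hB', hg, map_mul, map_add, map_sub, ← Module.End.mul_apply (aeval Y g) (_ + _),
        ← (hZf g).eq, Module.End.mul_apply, Module.End.mul_apply]
      abel
    rw [e2, e1, hu]
    simp only [map_add, map_sub]
    abel
  obtain ⟨f₁, u₁, e₁⟩ := cyclic_mod hXY hY v hcyc T₁
  obtain ⟨f₂, u₂, e₂⟩ := cyclic_mod hXY hY v hcyc T₂
  rcases dvd_total_aeval hY f₁ f₂ with ⟨g, hg⟩ | ⟨g, hg⟩
  · obtain ⟨c, k, u, hk, hu⟩ := key T₂ T₁ f₂ f₁ g u₂ u₁ h₁ e₂ e₁ hg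
    exact ⟨-c, 1, k, u, Or.inr one_ne_zero, hk, by rw [← hu, neg_smul, one_smul]; abel⟩
  · obtain ⟨c, k, u, hk, hu⟩ := key T₁ T₂ f₁ f₂ g u₁ u₂ h₂ e₁ e₂ hg
    exact ⟨1, -c, k, u, Or.inl one_ne_zero, hk, by rw [← hu, neg_smul, one_smul]; abel⟩

end Abstract

/-! ### The operators attached to Jordan blocks -/

section Concrete

variable {F : Type*} [Field F]

/-- The operator `(J_r - 1) ⊗ 1` on `F^r ⊗ F^s`. -/
def shiftL (F : Type*) [Field F] (r s : ℕ) : End F (Fin r × Fin s → F) where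
  toFun w := fun q => if h : (q.1 : ℕ) + 1 < r then w (⟨q.1 + 1, h⟩, q.2) else 0
  map_add' a b := by ext q; by_cases h : (q.1 : ℕ) + 1 < r <;> simp [h]
  map_smul' a b := by ext q; by_cases h : (q.1 : ℕ) + 1 < r <;> simp [h]

/-- The operator `1 ⊗ (J_s - 1)` on `F^r ⊗ F^s`. -/
def shiftR (F : Type*) [Field F] (r s : ℕ) : End F (Fin r × Fin s → F) where
  toFun w := fun q => if h : (q.2 : ℕ) + 1 < s then w (q.1, ⟨q.2 + 1, h⟩) else 0
  map_add' a b := by ext q; by_cases h : (q.2 : ℕ) + 1 < s <;> simp [h]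
  map_smul' a b := by ext q; by_cases h : (q.2 : ℕ) + 1 < s <;> simp [h]

/-- The diagonal operator `e_i ⊗ e_j ↦ j • (e_i ⊗ e_j)`. -/
def degR (F : Type*) [Field F] (r s : ℕ) : End F (Fin r × Fin s → F) where
  toFun w := fun q => ((q.2 : ℕ) : F) * w q
  map_add' a b := by ext q; simp [mul_add]
  map_smul' a b := by ext q; simp [mul_left_comm]

lemma shiftL_apply (r s : ℕ) (w : Fin r × Fin s → F) (q : Fin r × Fin s) :
    shiftL F r s w q = if h : (q.1 : ℕ) + 1 < r then w (⟨q.1 + 1, h⟩, q.2) else 0 := rfl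

lemma shiftR_apply (r s : ℕ) (w : Fin r × Fin s → F) (q : Fin r × Fin s) :
    shiftR F r s w q = if h : (q.2 : ℕ) + 1 < s then w (q.1, ⟨q.2 + 1, h⟩) else 0 := rfl

lemma degR_apply (r s : ℕ) (w : Fin r × Fin s → F) (q : Fin r × Fin s) :
    degR F r s w q = ((q.2 : ℕ) : F) * w q := rfl

lemma shift_comm (r s : ℕ) : Commute (shiftL F r s) (shiftR F r s) := by
  refine LinearMap.ext fun w => funext fun q => ?_
  simp only [Module.End.mul_apply, shiftL_apply, shiftR_apply]
  split_ifs <;> rfl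

lemma degR_shiftL (r s : ℕ) : Commute (degR F r s) (shiftL F r s) := by
  refine LinearMap.ext fun w => funext fun q => ?_
  simp only [Module.End.mul_apply, shiftL_apply, degR_apply]
  split_ifs <;> simp

lemma degR_shiftR (r s : ℕ) :
    degR F r s * shiftR F r s = shiftR F r s * degR F r s - shiftR F r s := by
  refine LinearMap.ext fun w => funext fun q => ?_
  simp only [Module.End.mul_apply, LinearMap.sub_apply, Pi.sub_apply, shiftR_apply, degR_apply]
  split_ifs
  · push_cast; ring
  · simp

lemma shiftL_pow_apply (r s n : ℕ) (w : Fin r × Fin s → F) (q : Fin r × Fin s) :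
    (shiftL F r s ^ n) w q = if h : (q.1 : ℕ) + n < r then w (⟨q.1 + n, h⟩, q.2) else 0 := by
  induction n generalizing w with
  | zero => simp
  | succ n ih =>
    rw [pow_succ, Module.End.mul_apply, ih]
    simp only [shiftL_apply]
    split_ifs <;> first | rfl | omega

lemma shiftR_pow_apply (r s n : ℕ) (w : Fin r × Fin s → F) (q : Fin r × Fin s) :
    (shiftR F r s ^ n) w q = if h : (q.2 : ℕ) + n < s then w (q.1, ⟨q.2 + n, h⟩) else 0 := by
  induction n generalizing w with
  | zero => simp
  | succ n ih =>
    rw [pow_succ, Module.End.mul_apply, ih]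
    simp only [shiftR_apply]
    split_ifs <;> first | rfl | omega

lemma shiftL_nilpotent (r s : ℕ) : IsNilpotent (shiftL F r s) :=
  ⟨r, by refine LinearMap.ext fun w => funext fun q => ?_; rw [shiftL_pow_apply]; simp⟩

lemma shiftR_nilpotent (r s : ℕ) : IsNilpotent (shiftR F r s) :=
  ⟨s, by refine LinearMap.ext fun w => funext fun q => ?_; rw [shiftR_pow_apply]; simp⟩

/-- The last basis vector generates `F^r ⊗ F^s` under the two shifts. -/
lemma shift_cyclic (r s : ℕ) (hr : 0 < r) (hs : 0 < s)
    (S : Submodule F (Fin r × Fin s → F))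
    (hv : Pi.single (⟨r - 1, by omega⟩, ⟨s - 1, by omega⟩) 1 ∈ S)
    (hX : ∀ w ∈ S, shiftL F r s w ∈ S) (hY : ∀ w ∈ S, shiftR F r s w ∈ S) : S = ⊤ := by
  have hXn : ∀ n : ℕ, ∀ w ∈ S, (shiftL F r s ^ n) w ∈ S := by
    intro n
    induction n with
    | zero => intro w hw; simpa using hw
    | succ n ih => intro w hw; rw [pow_succ, Module.End.mul_apply]; exact ih _ (hX w hw)
  have hYn : ∀ n : ℕ, ∀ w ∈ S, (shiftR F r s ^ n) w ∈ S := by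
    intro n
    induction n with
    | zero => intro w hw; simpa using hw
    | succ n ih => intro w hw; rw [pow_succ, Module.End.mul_apply]; exact ih _ (hY w hw)
  rw [eq_top_iff, ← (Pi.basisFun F (Fin r × Fin s)).span_eq, Submodule.span_le]
  rintro _ ⟨⟨i, j⟩, rfl⟩
  have h := hXn (r - 1 - i) _ (hYn (s - 1 - j) _ hv)
  rw [SetLike.mem_coe]
  convert h using 1
  ext ⟨a, b⟩
  rw [shiftL_pow_apply, Pi.basisFun_apply]
  simp only [shiftR_pow_apply, Pi.single_apply, Prod.mk.injEq, Fin.ext_iff]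
  have hi := i.2
  have hj := j.2
  have ha := a.2
  have hb := b.2
  split_ifs <;> first | rfl | omega

lemma jordanBlock_mulVec (d : ℕ) (w : Fin d → F) (j : Fin d) :
    (jordanBlock F d).mulVec w j = w j + if h : (j : ℕ) + 1 < d then w ⟨j + 1, h⟩ else 0 := by
  have h1 : ∀ k : Fin d, jordanBlock F d j k * w k =
      (if k = j then w k else 0) + (if (k : ℕ) = j + 1 then w k else 0) := by
    intro k
    simp only [jordanBlock, Matrix.of_apply, Fin.ext_iff]
    split_ifs <;> first | omega | simp
  simp only [Matrix.mulVec, dotProduct, h1, Finset.sum_add_distrib, Finset.sum_ite_eq',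
    Finset.mem_univ, if_true]
  congr 1
  split_ifs with h
  · rw [Finset.sum_eq_single ⟨j + 1, h⟩]
    · simp
    · intro b _ hb; rw [if_neg]; intro h'; exact hb (Fin.ext h')
    · simp
  · apply Finset.sum_eq_zero
    intro b _
    rw [if_neg]
    have := b.2
    omega

lemma kronecker_mulVec (r s : ℕ) (w : Fin r × Fin s → F) :
    (jordanBlock F r ⊗ₖ jordanBlock F s).mulVec w =
      w + (shiftL F r s + shiftR F r s + shiftL F r s * shiftR F r s) w := by
  ext ⟨i, j⟩
  have h : (jordanBlock F r ⊗ₖ jordanBlock F s).mulVec w (i, j) =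
      (jordanBlock F r).mulVec (fun a => (jordanBlock F s).mulVec (fun b => w (a, b)) j) i := by
    simp only [Matrix.mulVec, dotProduct, Fintype.sum_prod_type, Matrix.kroneckerMap_apply,
      Finset.mul_sum, mul_assoc]
  rw [h]
  simp only [jordanBlock_mulVec, Pi.add_apply, LinearMap.add_apply, Module.End.mul_apply,
    shiftL_apply, shiftR_apply]
  split_ifs <;> ring

/-- The nilpotent part of the block-diagonal Jordan matrix, as an operator. -/
def shiftDiag (F : Type*) [Field F] {ι : Type} (d : ι → ℕ) :
    End F (((i : ι) × Fin (d i)) → F) where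
  toFun w := fun q => if h : (q.2 : ℕ) + 1 < d q.1 then w ⟨q.1, ⟨q.2 + 1, h⟩⟩ else 0
  map_add' a b := by ext q; by_cases h : (q.2 : ℕ) + 1 < d q.1 <;> simp [h]
  map_smul' a b := by ext q; by_cases h : (q.2 : ℕ) + 1 < d q.1 <;> simp [h]

lemma shiftDiag_apply {ι : Type} (d : ι → ℕ) (w : ((i : ι) × Fin (d i)) → F)
    (q : (i : ι) × Fin (d i)) : shiftDiag F d w q =
      if h : (q.2 : ℕ) + 1 < d q.1 then w ⟨q.1, ⟨q.2 + 1, h⟩⟩ else 0 := rfl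

lemma shiftDiag_pow_apply {ι : Type} (d : ι → ℕ) (n : ℕ) (w : ((i : ι) × Fin (d i)) → F)
    (q : (i : ι) × Fin (d i)) : (shiftDiag F d ^ n) w q =
      if h : (q.2 : ℕ) + n < d q.1 then w ⟨q.1, ⟨q.2 + n, h⟩⟩ else 0 := by
  induction n generalizing w with
  | zero => simp
  | succ n ih =>
    rw [pow_succ, Module.End.mul_apply, ih]
    simp only [shiftDiag_apply]
    split_ifs <;> first | rfl | omega

lemma jordanBlockDiag_mulVec {ι : Type} [DecidableEq ι] [Fintype ι] (d : ι → ℕ)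
    (w : ((i : ι) × Fin (d i)) → F) :
    (jordanBlockDiag F d).mulVec w = w + shiftDiag F d w := by
  ext ⟨i, j⟩
  have h : (jordanBlockDiag F d).mulVec w ⟨i, j⟩ =
      (jordanBlock F (d i)).mulVec (fun b => w ⟨i, b⟩) j := by
    simp only [Matrix.mulVec, dotProduct, Fintype.sum_sigma, jordanBlockDiag]
    rw [Finset.sum_eq_single i]
    · simp
    · intro b _ hb
      apply Finset.sum_eq_zero
      intro c _
      rw [Matrix.blockDiagonal'_apply_ne _ _ _ hb.symm, zero_mul]
    · simp
  rw [h, jordanBlock_mulVec, Pi.add_apply, shiftDiag_apply]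

end Concrete

end JordanTensor

open JordanTensor in
/-- Every part of the Jordan partition with multiplicity greater than 1 is divisible by `p`. -/
theorem stmt_1 {F : Type*} [Field F] (p : ℕ) (hp : p.Prime) [CharP F p]
    (r s : ℕ) (hr : 0 < r) (hs : 0 < s)
    (t : ℕ) (μ : Fin t → ℕ) (m : Fin t → ℕ)
    (hμ : StrictAnti μ) (hμpos : ∀ i, 0 < μ i) (hm : ∀ i, 1 ≤ m i)
    (hsim : MatSimilar F (jordanBlock F r ⊗ₖ jordanBlock F s)
      (jordanBlockDiag F (fun x : (i : Fin t) × Fin (m i) => μ x.1))) :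
    ∀ i : Fin t, 1 < m i → p ∣ μ i := by
  intro i hi
  by_contra hpd
  obtain ⟨n, hn⟩ : ∃ n, μ i = n + 1 := ⟨μ i - 1, by have := hμpos i; omega⟩
  have hnF : ((n + 1 : ℕ) : F) ≠ 0 := by
    rw [← hn]; exact fun h => hpd ((CharP.cast_eq_zero_iff F p _).1 h)
  obtain ⟨e, he⟩ := hsim
  set d : ((i : Fin t) × Fin (m i)) → ℕ := fun x => μ x.1 with hd
  set Z := shiftL F r s + shiftR F r s + shiftL F r s * shiftR F r s with hZ
  have heZ : ∀ w, e (Z w) = shiftDiag F d (e w) := by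
    intro w
    have := he w
    rw [kronecker_mulVec, jordanBlockDiag_mulVec, map_add] at this
    exact add_left_cancel this
  have heZn : ∀ (k : ℕ) (w), e ((Z ^ k) w) = (shiftDiag F d ^ k) (e w) := by
    intro k
    induction k with
    | zero => intro w; simp
    | succ k ih =>
      intro w
      rw [pow_succ, Module.End.mul_apply, ih, heZ, pow_succ, Module.End.mul_apply]
  let x₁ : (i : Fin t) × Fin (m i) := ⟨i, ⟨0, by omega⟩⟩
  let x₂ : (i : Fin t) × Fin (m i) := ⟨i, ⟨1, hi⟩⟩
  have hne : x₁ ≠ x₂ := by simp [x₁, x₂]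
  have hd1 : d x₁ = n + 1 := hn
  have hd2 : d x₂ = n + 1 := hn
  -- The generator of a Jordan block of size `n + 1` is its last basis vector.
  let E : ((i : Fin t) × Fin (m i)) → (((x : (i : Fin t) × Fin (m i)) × Fin (d x)) → F) :=
    fun x q => if q.1 = x ∧ (q.2 : ℕ) = n then 1 else 0
  have hE : ∀ x, d x = n + 1 → (shiftDiag F d ^ (n + 1)) (E x) = 0 := by
    intro x hx
    funext q
    rw [shiftDiag_pow_apply]
    split_ifs with h
    · simp only [E, Pi.zero_apply]
      rw [if_neg]
      rintro ⟨-, h'⟩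
      omega
    · rfl
  obtain ⟨a, b, k, u, hab, hk, hu⟩ := exists_comb (shift_comm r s) (shiftL_nilpotent r s)
    (shiftR_nilpotent r s) (degR_shiftL r s) (degR_shiftR r s) _
    (shift_cyclic (F := F) r s hr hs) n hnF (e.symm (E x₁)) (e.symm (E x₂))
    (e.injective (by rw [heZn, e.apply_symm_apply, hE x₁ hd1, map_zero]))
    (e.injective (by rw [heZn, e.apply_symm_apply, hE x₂ hd2, map_zero]))
  rw [← hZ] at hk hu
  have hN : (shiftDiag F d ^ n) (a • E x₁ + b • E x₂) = (shiftDiag F d ^ (n + 1)) (e u) := by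
    have h1 := congrArg e (congrArg (Z ^ n) hu)
    rw [map_add (Z ^ n) k, hk, zero_add, ← Module.End.mul_apply, ← pow_succ, heZn, heZn] at h1
    simpa using h1
  -- The first coordinate of a block of size `n + 1` vanishes on the image of the `(n+1)`-st power.
  have h0 : ∀ x (hx : d x = n + 1), (a • E x₁ + b • E x₂) ⟨x, ⟨n, by omega⟩⟩ = 0 := by
    intro x hx
    have h1 := congrFun hN ⟨x, ⟨0, by omega⟩⟩
    rw [shiftDiag_pow_apply, shiftDiag_pow_apply, dif_pos (by simp [hx]), dif_neg (by simp [hx])]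
      at h1
    simpa using h1
  have ha := h0 x₁ hd1
  have hb := h0 x₂ hd2
  simp only [E, Pi.add_apply, Pi.smul_apply, hne, hne.symm] at ha hb
  rcases hab with h | h
  · exact h (by simpa using ha)
  · exact h (by simpa using hb)
end

section
/- Let p be a prime, F a field of characteristic p, and r, s positive integers. Suppose the Kronecker product J_r ⊗ J_s is similar over F to the block-diagonal matrix consisting, for each 1 ≤ i ≤ t, of exactly m_i ≥ 1 diagonal blocks equal to J_{μ_i}, where μ_1 > ⋯ > μ_t > 0. Then for every 1 ≤ i ≤ t one has the closed formula m_i = (−1)^{i−1}(r + s) + 2·Σ_{j=1}^{i−1} (−1)^{i−1−j} μ_j − μ_i (as an identity of integers). -/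
/-!
The nilpotent map `J_r ⊗ J_s - 1` is similar to multiplication by the homogeneous element
`z = x + y` on the graded algebra `A = F[x, y] / (x ^ r, y ^ s)` (`exists_kronecker_equiv`), so the
number `n k` of Jordan blocks of size greater than `k` is `dim (z ^ k A / z ^ (k+1) A)`.

The point is `block_size_relation`: if there are blocks of size exactly `k + 1`, then
`k + 1 + n (k+1) + n k = r + s`. Write `c = n (k+1) < e = n k`. Since `A / zA` is spanned by powers
of `x`, the quotient `z ^ k A / z ^ (k+1) A` has basis `z ^ k x ^ i`, `i < e`, and similarly for
`k + 1`. Hence there is a homogeneous `w` of degree `c`, congruent to `x ^ c` modulo `z`, with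
`z ^ (k+1) w = 0`. Put `u = z ^ k w`, an element of `ker z`. Then `x ^ e u = 0`, because
`z ^ k x ^ e` is a multiple of `z ^ (k+1)`. On the other hand `x ^ (e-1) u ≠ 0`: the socle of `A` is
a line, so `x` acts on `ker z` with a single Jordan block, and the stable subspace
`ker z ∩ z ^ (k+1) A`, of dimension `c`, is the kernel of `x ^ c` in `ker z`; but
`x ^ (e-1-c) u ≡ z ^ k x ^ (e-1)` is not in `z ^ (k+1) A`. Thus `x ^ (e-1) u` is a nonzero socle
element, homogeneous of degree `(e-1) + k + c`, while the socle sits in degree `r + s - 2`.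

For `k + 1 = μ i` this reads `μ i + m i + 2 ∑_{j < i} m j = r + s`, and `closed_formula` solves
these relations for `m`.
-/

open Kronecker

open Module TensorProduct

/-! ### Nilpotent endomorphisms -/

/-- A nilpotent endomorphism `f` that stabilises `P ≤ Q` acts nilpotently on `Q / P`, so its
`c`-th power maps `Q` into `P` as soon as `dim (Q / P) ≤ c`. -/
theorem nilp_pow_mem {F V : Type*} [Field F] [AddCommGroup V] [Module F V] [FiniteDimensional F V]
    (f : Module.End F V) (N : ℕ) (hf : f ^ N = 0) (P : Submodule F V) (hP : ∀ v ∈ P, f v ∈ P)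
    (c : ℕ) : ∀ Q : Submodule F V, P ≤ Q → (∀ v ∈ Q, f v ∈ Q) → finrank F Q ≤ finrank F P + c →
      ∀ v ∈ Q, (f ^ c) v ∈ P := by
  induction c with
  | zero =>
    intro Q hPQ _ hd v hv
    rw [Submodule.eq_of_le_of_finrank_le hPQ (by simpa using hd)]
    simpa using hv
  | succ c ih =>
    intro Q hPQ hQ hd v hv
    have hle : P ⊔ Q.map f ≤ Q := by
      refine sup_le hPQ ?_
      rintro _ ⟨w, hw, rfl⟩
      exact hQ w hw
    have hfv : ∀ w ∈ Q, f w ∈ P ⊔ Q.map f := fun w hw =>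
      Submodule.mem_sup_right (Submodule.mem_map_of_mem hw)
    by_cases h : finrank F Q ≤ finrank F (P ⊔ Q.map f : Submodule F V)
    · have hEq := Submodule.eq_of_le_of_finrank_le hle h
      -- `Q = P + f Q` iterates to `Q = P + f ^ n Q`, so nilpotency gives `Q = P`
      have key : ∀ n : ℕ, Q ≤ P ⊔ Q.map (f ^ n) := by
        intro n
        induction n with
        | zero => simp [Module.End.one_eq_id]
        | succ n ihn =>
          intro w hw
          obtain ⟨a, ha, b, hb, rfl⟩ := Submodule.mem_sup.1 (ihn hw)
          obtain ⟨q, hq, rfl⟩ := hb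
          have hq' : q ∈ P ⊔ Q.map f := by rw [hEq]; exact hq
          obtain ⟨a', ha', b', ⟨q', hqq, rfl⟩, rfl⟩ := Submodule.mem_sup.1 hq'
          rw [map_add, ← add_assoc]
          refine Submodule.add_mem_sup (P.add_mem ha ?_) ⟨q', hqq, ?_⟩
          · exact Module.End.pow_apply_mem_of_forall_mem n hP a' ha'
          · rw [pow_succ]; rfl
      have hQP : Q ≤ P := by simpa [hf] using key N
      exact Module.End.pow_apply_mem_of_forall_mem _ hP v (hQP hv)
    · rw [pow_succ]
      refine ih (P ⊔ Q.map f) le_sup_left (fun w hw => hfv w (hle hw)) (by omega) (f v) (hfv v hv)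

/-- Rank-nullity for the restriction of `g` to `Q`, as an inequality. -/
theorem finrank_le_of_map {F V : Type*} [Field F] [AddCommGroup V] [Module F V]
    [FiniteDimensional F V] (g : Module.End F V) (Q L : Submodule F V)
    (hL : ∀ v ∈ Q, g v ∈ L) :
    finrank F Q ≤ finrank F L + finrank F (Q ⊓ LinearMap.ker g : Submodule F V) := by
  have h := LinearMap.finrank_range_add_finrank_ker (g.domRestrict Q)
  have h1 : finrank F (LinearMap.range (g.domRestrict Q)) ≤ finrank F L := by
    refine Submodule.finrank_mono ?_
    rintro _ ⟨v, rfl⟩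
    exact hL v v.2
  have h2 : finrank F (LinearMap.ker (g.domRestrict Q))
      ≤ finrank F (Q ⊓ LinearMap.ker g : Submodule F V) := by
    refine LinearMap.finrank_le_finrank_of_injective
      (f := LinearMap.codRestrict (Q ⊓ LinearMap.ker g)
        (Q.subtype ∘ₗ (LinearMap.ker (g.domRestrict Q)).subtype) fun v => ⟨v.1.2, v.2⟩) ?_
    intro v w hvw
    exact Subtype.ext (Subtype.ext 
      (congrArg (fun a : (Q ⊓ LinearMap.ker g : Submodule F V) => (a : V)) hvw))
  omega

/-- If `f` has at most a line of kernel vectors in the stable subspace `K`, then the kernel of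
`f ^ c` in `K` has dimension at most `c`; so `f` acts on `K` with at most one Jordan block at `0`. -/
theorem ker_pow_finrank {F V : Type*} [Field F] [AddCommGroup V] [Module F V]
    [FiniteDimensional F V] (f : Module.End F V) (K : Submodule F V) (hK : ∀ v ∈ K, f v ∈ K)
    (h1 : finrank F (K ⊓ LinearMap.ker f : Submodule F V) ≤ 1) (c : ℕ) :
    finrank F (K ⊓ LinearMap.ker (f ^ c) : Submodule F V) ≤ c := by
  induction c with
  | zero => simp [Module.End.one_eq_id]
  | succ c ih =>
    have := finrank_le_of_map (f ^ c) (K ⊓ LinearMap.ker (f ^ (c + 1)))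
      (K ⊓ LinearMap.ker f) (by
        rintro v ⟨hv, hv'⟩
        refine ⟨Module.End.pow_apply_mem_of_forall_mem c hK v hv, ?_⟩
        change (f ^ (c + 1)) v = 0 at hv'
        rwa [pow_succ'] at hv')
    have h2 : finrank F (K ⊓ LinearMap.ker (f ^ (c + 1)) ⊓ LinearMap.ker (f ^ c) : Submodule F V)
        ≤ finrank F (K ⊓ LinearMap.ker (f ^ c) : Submodule F V) :=
      Submodule.finrank_mono (inf_le_inf_right _ inf_le_left)
    omega

/-! ### The truncated polynomial algebra -/

/-- `b` exhibits `A` as `F[x, y] / (x ^ r, y ^ s)`: the monomials `x ^ i y ^ j` with `i < r`, `j < s`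
form the basis `b`, and `x ^ r = y ^ s = 0`. -/
structure IsMonomialBasis {F A : Type*} [Field F] [CommRing A] [Algebra F A] (r s : ℕ) (x y : A)
    (b : Basis (Fin r × Fin s) F A) : Prop where
  apply : ∀ p, b p = x ^ (p.1 : ℕ) * y ^ (p.2 : ℕ)
  pow_x : x ^ r = 0
  pow_y : y ^ s = 0

section
variable {F A : Type*} [Field F] [CommRing A] [Algebra F A] {r s : ℕ} {x y : A}
    {b : Basis (Fin r × Fin s) F A}

/-- The ideal `z ^ k A`, as an `F`-subspace of `A`. -/
def powRange (F : Type*) {A : Type*} [Field F] [CommRing A] [Algebra F A] (z : A) (k : ℕ) :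
    Submodule F A := LinearMap.range (LinearMap.mulLeft F (z ^ k))

theorem powRange_mul {z a : A} {k : ℕ} (h : a ∈ powRange F z k) (t : A) :
    t * a ∈ powRange F z k := by
  obtain ⟨h, rfl⟩ := h
  exact ⟨t * h, by simp; ring⟩

theorem powRange_succ_le (z : A) (k : ℕ) : powRange F z (k + 1) ≤ powRange F z k := by
  rintro _ ⟨h, rfl⟩
  exact ⟨z * h, by simp; ring⟩

/-- Projection of `A = F[x, y] / (x ^ r, y ^ s)` onto the span of the monomials of total
degree `d`. -/
noncomputable def degProj (b : Basis (Fin r × Fin s) F A) (d : ℕ) : A →ₗ[F] A :=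
  b.constr F fun p => if (p.1 : ℕ) + p.2 = d then b p else 0

theorem degProj_monomial (hb : IsMonomialBasis r s x y b) (d i j : ℕ) :
    degProj b d (x ^ i * y ^ j) = if i + j = d then x ^ i * y ^ j else 0 := by
  by_cases hi : i < r
  · by_cases hj : j < s
    · have := hb.apply (⟨i, hi⟩, ⟨j, hj⟩)
      simp only at this
      rw [← this, degProj, Basis.constr_basis]
    · rw [pow_eq_zero_of_le (not_lt.1 hj) hb.pow_y]; simp
  · rw [pow_eq_zero_of_le (not_lt.1 hi) hb.pow_x]; simp

theorem degProj_x_mul (hb : IsMonomialBasis r s x y b) (d : ℕ) (a : A) :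
    degProj b (d + 1) (x * a) = x * degProj b d a := by
  have : degProj b (d + 1) ∘ₗ LinearMap.mulLeft F x = LinearMap.mulLeft F x ∘ₗ degProj b d := by
    refine b.ext fun p => ?_
    simp only [LinearMap.comp_apply, LinearMap.mulLeft_apply, hb.apply, ← mul_assoc, ← pow_succ']
    rw [degProj_monomial hb, degProj_monomial hb, mul_ite, ← mul_assoc, ← pow_succ', mul_zero]
    exact if_congr (by omega) rfl rfl
  exact LinearMap.congr_fun this a

theorem degProj_y_mul (hb : IsMonomialBasis r s x y b) (d : ℕ) (a : A) :
    degProj b (d + 1) (y * a) = y * degProj b d a := by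
  have : degProj b (d + 1) ∘ₗ LinearMap.mulLeft F y = LinearMap.mulLeft F y ∘ₗ degProj b d := by
    refine b.ext fun p => ?_
    simp only [LinearMap.comp_apply, LinearMap.mulLeft_apply, hb.apply]
    rw [mul_left_comm, ← pow_succ', degProj_monomial hb, degProj_monomial hb, mul_ite,
      mul_left_comm, ← pow_succ', mul_zero]
    exact if_congr (by omega) rfl rfl
  exact LinearMap.congr_fun this a

theorem degProj_zero_mul (hb : IsMonomialBasis r s x y b) (a : A) :
    degProj b 0 ((x + y) * a) = 0 := by
  have : degProj b 0 ∘ₗ LinearMap.mulLeft F (x + y) = 0 := by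
    refine b.ext fun p => ?_
    simp only [LinearMap.comp_apply, LinearMap.mulLeft_apply, hb.apply, LinearMap.zero_apply]
    rw [add_mul, map_add, ← mul_assoc, ← pow_succ', mul_left_comm, ← pow_succ',
      degProj_monomial hb, degProj_monomial hb]
    simp
  exact LinearMap.congr_fun this a

theorem degProj_add_mul (hb : IsMonomialBasis r s x y b) (d : ℕ) (a : A) :
    degProj b (d + 1) ((x + y) * a) = (x + y) * degProj b d a := by
  rw [add_mul, map_add, degProj_x_mul hb, degProj_y_mul hb, add_mul]

theorem degProj_pow_mul (t : A)
    (ht : ∀ d a, degProj b (d + 1) (t * a) = t * degProj b d a) (m d : ℕ) (a : A) :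
    degProj b (d + m) (t ^ m * a) = t ^ m * degProj b d a := by
  induction m with
  | zero => simp
  | succ m ih => rw [pow_succ', mul_assoc, ← add_assoc, ht, ih, mul_assoc]

/-- Modulo `z = x + y` one has `y = -x`, so `A / zA` is spanned by the powers of `x`. -/
theorem mem_span_pow_sup (hb : IsMonomialBasis r s x y b) (a : A) :
    a ∈ Submodule.span F (Set.range fun i : ℕ => x ^ i) ⊔ powRange F (x + y) 1 := by
  have ha : a ∈ Submodule.span F (Set.range b) := by simp [b.span_eq]
  refine Submodule.span_le.2 ?_ ha
  rintro _ ⟨p, rfl⟩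
  rw [hb.apply]
  have h : x + y ∣ y ^ (p.2 : ℕ) - (-x) ^ (p.2 : ℕ) := by
    have := sub_dvd_pow_sub_pow y (-x) (p.2 : ℕ)
    rwa [sub_neg_eq_add, add_comm y] at this
  obtain ⟨h, hh⟩ := h
  have : x ^ (p.1 : ℕ) * y ^ (p.2 : ℕ) =
      ((-1 : F) ^ (p.2 : ℕ)) • x ^ (p.1 + p.2 : ℕ) + (x + y) ^ 1 * (x ^ (p.1 : ℕ) * h) := by
    rw [sub_eq_iff_eq_add.1 hh, neg_pow, pow_add, Algebra.smul_def]
    simp; ring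
  rw [this]
  exact Submodule.add_mem_sup (Submodule.smul_mem _ _ (Submodule.subset_span ⟨_, rfl⟩)) ⟨_, rfl⟩

/-- `z ^ k A / z ^ (k + 1) A` is spanned by the classes of `z ^ k x ^ j`, and only by those with
`j < i` when `z ^ k x ^ i` is in `z ^ (k + 1) A`. -/
theorem finrank_powRange_le [FiniteDimensional F A] (hb : IsMonomialBasis r s x y b) {k i : ℕ}
    (h : (x + y) ^ k * x ^ i ∈ powRange F (x + y) (k + 1)) :
    finrank F (powRange F (x + y) k) ≤ finrank F (powRange F (x + y) (k + 1)) + i := by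
  set W : Submodule F A := Submodule.span F (Set.range fun j : Fin i => (x + y) ^ k * x ^ (j : ℕ))
  have hW : finrank F W ≤ i := by
    have := finrank_range_le_card (R := F) (fun j : Fin i => (x + y) ^ k * x ^ (j : ℕ))
    rwa [Fintype.card_fin] at this
  have hle : powRange F (x + y) k ≤ powRange F (x + y) (k + 1) ⊔ W := by
    rintro _ ⟨a, rfl⟩
    obtain ⟨q, hq, _, ⟨g, rfl⟩, rfl⟩ := Submodule.mem_sup.1 (mem_span_pow_sup hb a)
    rw [map_add]
    refine Submodule.add_mem _ ?_ (Submodule.mem_sup_left ⟨g, by simp; ring⟩)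
    have : Submodule.span F (Set.range fun i : ℕ => x ^ i) ≤
        (powRange F (x + y) (k + 1) ⊔ W).comap (LinearMap.mulLeft F ((x + y) ^ k)) := by
      refine Submodule.span_le.2 ?_
      rintro _ ⟨j, rfl⟩
      by_cases hj : j < i
      · exact Submodule.mem_sup_right (Submodule.subset_span ⟨⟨j, hj⟩, rfl⟩)
      · refine Submodule.mem_sup_left ?_
        have := powRange_mul h (x ^ (j - i))
        rwa [mul_left_comm, ← pow_add, Nat.sub_add_cancel (not_lt.1 hj)] at this
    exact this hq
  calc _ ≤ _ := Submodule.finrank_mono hle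
    _ ≤ _ := Submodule.finrank_add_le_finrank_add_finrank _ _
    _ ≤ _ := by omega

/-- If `dim (z ^ k A / z ^ (k + 1) A) = c`, then `x ^ c` kills this quotient because `x` is
nilpotent. -/
theorem pow_mul_mem_powRange [FiniteDimensional F A] (hb : IsMonomialBasis r s x y b) {k c : ℕ}
    (h : finrank F (powRange F (x + y) k) = finrank F (powRange F (x + y) (k + 1)) + c) :
    ∃ g, (x + y) ^ k * x ^ c = (x + y) ^ (k + 1) * g := by
  have := nilp_pow_mem (LinearMap.mulLeft F x) r (by rw [LinearMap.pow_mulLeft, hb.pow_x]; simp)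
    (powRange F (x + y) (k + 1)) (fun v hv => powRange_mul hv x) c (powRange F (x + y) k)
    (powRange_succ_le _ _) (fun v hv => powRange_mul hv x) h.le ((x + y) ^ k)
    ⟨1, by simp⟩
  rw [LinearMap.pow_mulLeft] at this
  obtain ⟨g, hg⟩ := this
  exact ⟨g, by simpa [mul_comm] using hg.symm⟩

/-- The socle of `A` lies in the line spanned by the top monomial. -/
theorem exists_smul_top_of_mul_eq_zero (hr : 0 < r) (hs : 0 < s)
    (hb : IsMonomialBasis r s x y b) {a : A} (hx : x * a = 0) (hy : y * a = 0) :
    ∃ t : F, a = t • (x ^ (r - 1) * y ^ (s - 1)) := by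
  have hcoef : ∀ p : Fin r × Fin s, p ≠ (⟨r - 1, by omega⟩, ⟨s - 1, by omega⟩) →
      b.repr a p = 0 := by
    rintro ⟨i, j⟩ hp
    by_cases hi : (i : ℕ) + 1 < r
    · have h : b.coord (⟨i + 1, hi⟩, j) ∘ₗ LinearMap.mulLeft F x = b.coord (i, j) := by
        refine b.ext fun q => ?_
        obtain ⟨q1, q2⟩ := q
        have e : x * b (q1, q2) = if h : (q1 : ℕ) + 1 < r then b (⟨q1 + 1, h⟩, q2) else 0 := by
          split_ifs with h
          · simp [hb.apply, pow_succ', mul_assoc]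
          · rw [hb.apply, ← mul_assoc, ← pow_succ',
              pow_eq_zero_of_le (not_lt.1 h) hb.pow_x, zero_mul]
        simp only [LinearMap.comp_apply, LinearMap.mulLeft_apply, e]
        split_ifs with h
        · simp [Finsupp.single_apply, Fin.ext_iff]
        · have : q1 ≠ i := by rintro rfl; exact h hi
          simp [this]
      have := LinearMap.congr_fun h a
      simpa [hx] using this.symm
    · have hj : (j : ℕ) + 1 < s := by
        by_contra hj
        apply hp
        ext <;> simp <;> omega
      have h : b.coord (i, ⟨j + 1, hj⟩) ∘ₗ LinearMap.mulLeft F y = b.coord (i, j) := by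
        refine b.ext fun q => ?_
        obtain ⟨q1, q2⟩ := q
        have e : y * b (q1, q2) = if h : (q2 : ℕ) + 1 < s then b (q1, ⟨q2 + 1, h⟩) else 0 := by
          split_ifs with h
          · simp [hb.apply, pow_succ', mul_left_comm]
          · rw [hb.apply, mul_left_comm, ← pow_succ',
              pow_eq_zero_of_le (not_lt.1 h) hb.pow_y, mul_zero]
        simp only [LinearMap.comp_apply, LinearMap.mulLeft_apply, e]
        split_ifs with h
        · simp [Finsupp.single_apply, Fin.ext_iff]
        · have : q2 ≠ j := by rintro rfl; exact h hj
          simp [this]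
      have := LinearMap.congr_fun h a
      simpa [hy] using this.symm
  refine ⟨b.repr a (⟨r - 1, by omega⟩, ⟨s - 1, by omega⟩), ?_⟩
  conv_lhs => rw [← b.sum_repr a]
  rw [Finset.sum_eq_single (⟨r - 1, by omega⟩, ⟨s - 1, by omega⟩), hb.apply]
  · intro p _ hp
    rw [hcoef p hp, zero_smul]
  · simp

/-- With `c = dim (z ^ (k+1) A / z ^ (k+2) A)` and `e = dim (z ^ k A / z ^ (k+1) A)`, where
`z = x + y`: if `c < e`, i.e. if `z` has Jordan blocks of size exactly `k + 1`, then
`k + 1 + c + e = r + s`. -/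
theorem block_size_relation [FiniteDimensional F A] (hr : 0 < r) (hs : 0 < s)
    (hb : IsMonomialBasis r s x y b) {k c e : ℕ}
    (hc : finrank F (powRange F (x + y) (k + 1)) = finrank F (powRange F (x + y) (k + 2)) + c)
    (he : finrank F (powRange F (x + y) k) = finrank F (powRange F (x + y) (k + 1)) + e)
    (hce : c < e) : k + 1 + c + e = r + s := by
  obtain ⟨h, hh⟩ := pow_mul_mem_powRange hb hc
  obtain ⟨h', hh'⟩ := pow_mul_mem_powRange hb he
  -- `w` is the degree `c` component of `x ^ c - z h`, which is killed by `z ^ (k + 1)`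
  obtain ⟨w, hwdeg, hw0, g, hwg⟩ : ∃ w, degProj b c w = w ∧ (x + y) ^ (k + 1) * w = 0 ∧
      ∃ g, w = x ^ c - (x + y) * g := by
    have hxc : degProj b c (x ^ c) = x ^ c := by simpa using degProj_monomial hb c c 0
    have hex : ∃ g, degProj b c (x ^ c - (x + y) * h) = x ^ c - (x + y) * g := by
      rw [map_sub, hxc]
      cases c with
      | zero => exact ⟨0, by rw [degProj_zero_mul hb, mul_zero]⟩
      | succ c => exact ⟨degProj b c h, by rw [degProj_add_mul hb]⟩
    have hidem : ∀ a, degProj b c (degProj b c a) = degProj b c a := by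
      intro a
      have : degProj b c ∘ₗ degProj b c = degProj b c := by
        refine b.ext fun p => ?_
        simp only [LinearMap.comp_apply, hb.apply]
        rw [degProj_monomial hb]
        split_ifs with h
        · rw [degProj_monomial hb, if_pos h]
        · simp
      exact LinearMap.congr_fun this a
    refine ⟨degProj b c (x ^ c - (x + y) * h), hidem _, ?_, hex⟩
    rw [← degProj_pow_mul (x + y) (degProj_add_mul hb)]
    have : (x + y) ^ (k + 1) * (x ^ c - (x + y) * h) = 0 := by
      rw [mul_sub, hh]; ring
    rw [this, map_zero]
  set u := (x + y) ^ k * w with hu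
  have hzu : (x + y) * u = 0 := by rw [hu, ← mul_assoc, ← pow_succ', hw0]
  -- `x ^ (e-1-c) u ≡ z ^ k x ^ (e-1)` modulo `z ^ (k+1) A`
  have hnot : x ^ (e - 1 - c) * u ∉ powRange F (x + y) (k + 1) := by
    intro hmem
    have h1 : (x + y) ^ k * x ^ (e - 1) ∈ powRange F (x + y) (k + 1) := by
      have : (x + y) ^ k * x ^ (e - 1) =
          x ^ (e - 1 - c) * u + (x + y) ^ (k + 1) * (g * x ^ (e - 1 - c)) := by
        have hpow : x ^ (e - 1) = x ^ (e - 1 - c) * x ^ c := by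
          rw [← pow_add, Nat.sub_add_cancel (by omega)]
        rw [hu, hwg, hpow]; ring
      rw [this]
      exact Submodule.add_mem _ hmem ⟨_, rfl⟩
    have := finrank_powRange_le hb h1
    omega
  set K : Submodule F A := LinearMap.ker (LinearMap.mulLeft F (x + y))
  have hKx : ∀ v ∈ K, LinearMap.mulLeft F x v ∈ K := by
    intro v hv
    change (x + y) * v = 0 at hv
    change (x + y) * (x * v) = 0
    rw [mul_left_comm, hv, mul_zero]
  have hK1 : finrank F (K ⊓ LinearMap.ker (LinearMap.mulLeft F x) : Submodule F A) ≤ 1 := by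
    have hle : K ⊓ LinearMap.ker (LinearMap.mulLeft F x) ≤
        Submodule.span F {x ^ (r - 1) * y ^ (s - 1)} := by
      rintro v ⟨hv, hv'⟩
      change (x + y) * v = 0 at hv
      change x * v = 0 at hv'
      rw [add_mul, hv', zero_add] at hv
      obtain ⟨t, ht⟩ := exists_smul_top_of_mul_eq_zero hr hs hb hv' hv
      exact Submodule.mem_span_singleton.2 ⟨t, ht.symm⟩
    refine (Submodule.finrank_mono hle).trans ?_
    have := finrank_span_le_card (R := F) ({x ^ (r - 1) * y ^ (s - 1)} : Set A)
    simpa using this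
  set U : Submodule F A := powRange F (x + y) (k + 1) ⊓ K with hU
  have hUc : c ≤ finrank F U := by
    have := finrank_le_of_map (LinearMap.mulLeft F (x + y)) (powRange F (x + y) (k + 1))
      (powRange F (x + y) (k + 2)) (by
        rintro _ ⟨q, rfl⟩
        exact ⟨q, by simp; ring⟩)
    change _ ≤ _ + finrank F U at this
    omega
  -- `x` acts on `K = ker z` with one Jordan block, so its stable subspaces are the kernels of
  -- the powers of `x` in `K`
  have hUT : U = K ⊓ LinearMap.ker (LinearMap.mulLeft F x ^ finrank F U) := by
    refine Submodule.eq_of_le_of_finrank_le ?_ (ker_pow_finrank _ K hKx hK1 _)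
    intro v hv
    refine ⟨hv.2, ?_⟩
    have := nilp_pow_mem (LinearMap.mulLeft F x) r
      (by rw [LinearMap.pow_mulLeft, hb.pow_x]; simp) ⊥ (by simp) (finrank F U) U bot_le
      (fun v hv => ⟨powRange_mul hv.1 x, hKx v hv.2⟩) (by simp) v hv
    simpa using this
  have hne : x ^ (e - 1) * u ≠ 0 := by
    intro h0
    apply hnot
    have : x ^ (e - 1 - c) * u ∈ U := by
      rw [hUT]
      constructor
      · change (x + y) * _ = 0
        rw [mul_left_comm, hzu, mul_zero]
      · change (LinearMap.mulLeft F x ^ finrank F U) _ = 0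
        rw [LinearMap.pow_mulLeft, LinearMap.mulLeft_apply, ← mul_assoc, ← pow_add,
          show finrank F U + (e - 1 - c) = (finrank F U - c) + (e - 1) by omega, pow_add,
          mul_assoc, h0, mul_zero]
    exact this.1
  have hxu : x * (x ^ (e - 1) * u) = 0 := by
    rw [← mul_assoc, ← pow_succ', Nat.sub_add_cancel (by omega), hu]
    calc x ^ e * ((x + y) ^ k * w) = ((x + y) ^ k * x ^ e) * w := by ring
      _ = h' * ((x + y) ^ (k + 1) * w) := by rw [hh']; ring
      _ = 0 := by rw [hw0, mul_zero]
  have hyu : y * (x ^ (e - 1) * u) = 0 := by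
    have : (x + y) * (x ^ (e - 1) * u) = 0 := by rw [mul_left_comm, hzu, mul_zero]
    rwa [add_mul, hxu, zero_add] at this
  obtain ⟨t, ht⟩ := exists_smul_top_of_mul_eq_zero hr hs hb hxu hyu
  have hdeg : degProj b (c + k + (e - 1)) (x ^ (e - 1) * u) = x ^ (e - 1) * u := by
    rw [degProj_pow_mul x (degProj_x_mul hb), hu,
      degProj_pow_mul (x + y) (degProj_add_mul hb), hwdeg]
  -- `x ^ (e-1) u` is a nonzero socle element, hence of degree `r + s - 2`, and it is homogeneous
  -- of degree `c + k + (e - 1)`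
  by_contra hcon
  apply hne
  rw [← hdeg, ht, map_smul, degProj_monomial hb, if_neg (by omega), smul_zero]
end

/-! ### Transport to the Kronecker product -/

theorem exists_monomialBasis.{u} (F : Type u) [Field F] (r s : ℕ) :
    ∃ (A : Type u) (_ : CommRing A) (_ : Algebra F A) (x y : A)
      (b : Basis (Fin r × Fin s) F A), IsMonomialBasis r s x y b := by
  have hmon : ∀ n : ℕ, (Polynomial.X ^ n : Polynomial F).Monic := Polynomial.monic_X_pow
  let P := fun n : ℕ => AdjoinRoot.powerBasis' (hmon n)
  let B := fun n : ℕ => (P n).basis.reindex (finCongr (Polynomial.natDegree_X_pow (R := F) n))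
  have hB : ∀ (n : ℕ) (i : Fin n), B n i =
      AdjoinRoot.root (Polynomial.X ^ n : Polynomial F) ^ (i : ℕ) := by
    intro n i
    simp only [B, P, Basis.reindex_apply, PowerBasis.basis_eq_pow]
    rfl
  have h0 : ∀ n : ℕ, AdjoinRoot.root (Polynomial.X ^ n : Polynomial F) ^ n = 0 := by
    intro n
    have := AdjoinRoot.eval₂_root (Polynomial.X ^ n : Polynomial F)
    simpa using this
  refine ⟨TensorProduct F (AdjoinRoot (Polynomial.X ^ r : Polynomial F))
    (AdjoinRoot (Polynomial.X ^ s : Polynomial F)), inferInstance, inferInstance,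
    AdjoinRoot.root _ ⊗ₜ 1, 1 ⊗ₜ AdjoinRoot.root _, (B r).tensorProduct (B s), ?_, ?_, ?_⟩
  · rintro ⟨i, j⟩
    simp [Basis.tensorProduct_apply, hB]
  · simp [h0]
  · simp [h0]

theorem jordan_col {F A : Type*} [Field F] [AddCommGroup A] [Module F A] {n : ℕ} (φ : ℕ → A)
    (i : Fin n) : ∑ l : Fin n, jordanBlock F n l i • φ l =
      φ i + if (i : ℕ) = 0 then 0 else φ (i - 1) := by
  have h : ∀ l : Fin n, jordanBlock F n l i • φ l =
      (if l = i then φ l else 0) + (if (l : ℕ) + 1 = i then φ l else 0) := by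
    intro l
    simp only [jordanBlock, Matrix.of_apply, Fin.ext_iff]
    split_ifs <;> first | omega | simp
  simp only [h, Finset.sum_add_distrib, Finset.sum_ite_eq', Finset.mem_univ, if_true]
  congr 1
  split_ifs with h0
  · exact Finset.sum_eq_zero fun l _ => if_neg (by omega)
  · rw [Finset.sum_eq_single (⟨i - 1, by omega⟩ : Fin n)]
    · rw [if_pos (by simp; omega)]
    · intro l _ hl
      exact if_neg fun h => hl (Fin.ext (by simp; omega))
    · simp

/-- `J_r ⊗ J_s` is similar to multiplication by `1 + x + y` on `F[x, y] / (x ^ r, y ^ s)`. The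
standard basis vector `(i, j)` is sent to `x ^ (r-1-i) (1 + x) ^ j y ^ (s-1-j)`; the factor
`(1 + x) ^ j` turns `(1 + x)(1 + y)` into `1 + x + y`. -/
theorem exists_kronecker_equiv {F A : Type*} [Field F] [CommRing A] [Algebra F A] {r s : ℕ}
    {x y : A} {b : Basis (Fin r × Fin s) F A} (hb : IsMonomialBasis r s x y b) :
    ∃ E : (Fin r × Fin s → F) ≃ₗ[F] A, ∀ v,
      E ((jordanBlock F r ⊗ₖ jordanBlock F s).mulVec v) = (1 + (x + y)) * E v := by
  have : FiniteDimensional F A := b.finiteDimensional_of_finite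
  let X : Fin r × Fin s → A := fun p =>
    x ^ (r - 1 - (p.1 : ℕ)) * ((1 + x) ^ (p.2 : ℕ) * y ^ (s - 1 - (p.2 : ℕ)))
  let E : (Fin r × Fin s → F) →ₗ[F] A := Fintype.linearCombination F X
  have hE : ∀ v, E v = ∑ p, v p • X p := fun v => Fintype.linearCombination_apply F X v
  have hEX : ∀ p, X p ∈ LinearMap.range E := fun p =>
    ⟨Pi.single p 1, by simp [E, Fintype.linearCombination_apply_single]⟩
  have hxE : ∀ a ∈ LinearMap.range E, x * a ∈ LinearMap.range E := by
    rintro _ ⟨v, rfl⟩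
    rw [hE, Finset.mul_sum]
    refine Submodule.sum_mem _ fun p _ => ?_
    rw [mul_smul_comm]
    refine Submodule.smul_mem _ _ ?_
    obtain ⟨i, j⟩ := p
    simp only [X]
    rw [← mul_assoc, ← pow_succ']
    by_cases hi : (i : ℕ) = 0
    · rw [pow_eq_zero_of_le (by omega) hb.pow_x, zero_mul]
      exact Submodule.zero_mem _
    · have := hEX (⟨i - 1, by omega⟩, j)
      simp only [X] at this
      rwa [show r - 1 - ((i : ℕ) - 1) = r - 1 - i + 1 by omega] at this
  -- the inverse of `1 + x` is a polynomial in `x`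
  obtain ⟨g, hg1, hgE⟩ : ∃ g, g * (1 + x) = 1 ∧
      ∀ a ∈ LinearMap.range E, g * a ∈ LinearMap.range E := by
    refine ⟨∑ i ∈ Finset.range r, (-x) ^ i, ?_, ?_⟩
    · have := geom_sum_mul_neg (-x) r
      rwa [neg_pow x r, hb.pow_x, mul_zero, sub_zero, sub_neg_eq_add] at this
    · intro a ha
      rw [Finset.sum_mul]
      refine Submodule.sum_mem _ fun i hi => ?_
      clear hi
      induction i with
      | zero => simpa using ha
      | succ i ih =>
        rw [pow_succ', mul_assoc, neg_mul]
        exact Submodule.neg_mem _ (hxE _ ih)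
  have hsurj : Function.Surjective E := by
    rw [← LinearMap.range_eq_top, eq_top_iff, ← b.span_eq, Submodule.span_le]
    rintro _ ⟨⟨i, j⟩, rfl⟩
    have hpow : ∀ n : ℕ, ∀ a ∈ LinearMap.range E, g ^ n * a ∈ LinearMap.range E := by
      intro n a ha
      induction n with
      | zero => simpa using ha
      | succ n ih => rw [pow_succ', mul_assoc]; exact hgE _ ih
    have := hpow (s - 1 - j) _ (hEX (⟨r - 1 - i, by omega⟩, ⟨s - 1 - j, by omega⟩))
    simp only [X] at this
    rw [mul_left_comm, ← mul_assoc (g ^ _), ← mul_pow, hg1, one_pow, one_mul,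
      show r - 1 - (r - 1 - (i : ℕ)) = i by omega,
      show s - 1 - (s - 1 - (j : ℕ)) = j by omega] at this
    rwa [← hb.apply (i, j)] at this
  have hfr : finrank F (Fin r × Fin s → F) = finrank F A := by
    rw [finrank_eq_card_basis b, finrank_fintype_fun_eq_card]
  have hinj : Function.Injective E :=
    (LinearMap.injective_iff_surjective_of_finrank_eq_finrank hfr).2 hsurj
  refine ⟨LinearEquiv.ofBijective E ⟨hinj, hsurj⟩, fun v => ?_⟩
  have hcol : ∀ q, ∑ p, (jordanBlock F r ⊗ₖ jordanBlock F s) p q • X p = (1 + (x + y)) * X q := by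
    rintro ⟨i, j⟩
    have hi := jordan_col (F := F) (fun l => x ^ (r - 1 - l)) i
    have hj := jordan_col (F := F) (fun l => (1 + x) ^ l * y ^ (s - 1 - l)) j
    have h1 : (x ^ (r - 1 - (i : ℕ)) + if (i : ℕ) = 0 then 0 else x ^ (r - 1 - ((i : ℕ) - 1))) =
        (1 + x) * x ^ (r - 1 - (i : ℕ)) := by
      rw [add_mul, one_mul, ← pow_succ']
      congr 1
      split_ifs with h
      · rw [pow_eq_zero_of_le (by omega) hb.pow_x]
      · congr 1; omega
    have h2 : (1 + x) * ((1 + x) ^ (j : ℕ) * y ^ (s - 1 - (j : ℕ)) + if (j : ℕ) = 0 then 0 else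
        (1 + x) ^ ((j : ℕ) - 1) * y ^ (s - 1 - ((j : ℕ) - 1))) =
        (1 + (x + y)) * ((1 + x) ^ (j : ℕ) * y ^ (s - 1 - (j : ℕ))) := by
      split_ifs with h
      · have : y * y ^ (s - 1 - (j : ℕ)) = 0 := by
          rw [← pow_succ', pow_eq_zero_of_le (by omega) hb.pow_y]
        rw [add_zero, ← add_assoc, add_mul _ y, mul_left_comm y, this, mul_zero, add_zero]
      · rw [show s - 1 - ((j : ℕ) - 1) = s - 1 - j + 1 by omega]
        obtain ⟨n, hn⟩ := Nat.exists_eq_succ_of_ne_zero h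
        rw [hn, Nat.succ_sub_one, Nat.succ_eq_add_one, pow_succ y, pow_succ (1 + x)]
        ring
    calc _ = ∑ l : Fin r, ∑ l' : Fin s, (jordanBlock F r l i • x ^ (r - 1 - (l : ℕ))) *
          (jordanBlock F s l' j • ((1 + x) ^ (l' : ℕ) * y ^ (s - 1 - (l' : ℕ)))) := by
          rw [Fintype.sum_prod_type]
          refine Finset.sum_congr rfl fun l _ => Finset.sum_congr rfl fun l' _ => ?_
          rw [smul_mul_smul_comm]
          rfl
      _ = _ := by
        rw [← Finset.sum_mul_sum, hi, hj, h1, mul_right_comm, h2]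
        simp only [X]; ring
  change E _ = _ * E v
  simp only [hE, Matrix.mulVec, dotProduct, Finset.sum_smul, Finset.mul_sum]
  rw [Finset.sum_comm]
  refine Finset.sum_congr rfl fun q _ => ?_
  rw [mul_smul_comm, ← hcol, Finset.smul_sum]
  refine Finset.sum_congr rfl fun p _ => ?_
  rw [smul_smul, mul_comm]

/-! ### Ranks of powers for a block-diagonal Jordan matrix -/

/-- The `k`-fold shift inside each block, `w (i, j) ↦ w (i, j + k)` with zero past the end of the
block: the `k`-th power of the nilpotent part of the block-diagonal Jordan matrix. -/
def blockShift {F : Type*} [Field F] {ι : Type} (d : ι → ℕ) (k : ℕ)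
    (w : ((i : ι) × Fin (d i)) → F) : ((i : ι) × Fin (d i)) → F := fun q =>
  if h : (q.2 : ℕ) + k < d q.1 then w ⟨q.1, ⟨q.2 + k, h⟩⟩ else 0

theorem jordanBlockDiag_mulVec {F : Type*} [Field F] {ι : Type} [Fintype ι] [DecidableEq ι]
    (d : ι → ℕ) (w : ((i : ι) × Fin (d i)) → F) :
    (jordanBlockDiag F d).mulVec w = w + blockShift d 1 w := by
  ext ⟨i, j⟩
  have h1 : (jordanBlockDiag F d).mulVec w ⟨i, j⟩ =
      ∑ l : Fin (d i), jordanBlock F (d i) j l * w ⟨i, l⟩ := by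
    simp only [Matrix.mulVec, dotProduct, jordanBlockDiag]
    rw [Fintype.sum_sigma, Finset.sum_eq_single i]
    · simp [Matrix.blockDiagonal'_apply_eq]
    · intro i' _ hi'
      refine Finset.sum_eq_zero fun l _ => ?_
      rw [Matrix.blockDiagonal'_apply_ne _ _ _ hi'.symm, zero_mul]
    · simp
  have h2 : ∀ l : Fin (d i), jordanBlock F (d i) j l * w ⟨i, l⟩ =
      (if l = j then w ⟨i, l⟩ else 0) + (if (l : ℕ) = j + 1 then w ⟨i, l⟩ else 0) := by
    intro l
    simp only [jordanBlock, Matrix.of_apply, Fin.ext_iff]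
    split_ifs <;> first | omega | simp
  rw [h1]
  simp only [h2, Finset.sum_add_distrib, Finset.sum_ite_eq', Finset.mem_univ, if_true,
    Pi.add_apply, blockShift]
  congr 1
  split_ifs with h
  · rw [Finset.sum_eq_single (⟨j + 1, h⟩ : Fin (d i))]
    · simp
    · intro l _ hl
      exact if_neg fun h => hl (Fin.ext h)
    · simp
  · exact Finset.sum_eq_zero fun l _ => if_neg (by omega)

theorem blockShift_succ {F : Type*} [Field F] {ι : Type} (d : ι → ℕ) (k : ℕ)
    (w : ((i : ι) × Fin (d i)) → F) :
    blockShift d (k + 1) w = blockShift d 1 (blockShift d k w) := by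
  ext ⟨i, j⟩
  simp only [blockShift]
  by_cases h : (j : ℕ) + (k + 1) < d i
  · rw [dif_pos h, dif_pos (by omega), dif_pos (by omega)]
    congr 3; omega
  · rw [dif_neg h]
    split_ifs <;> first | rfl | omega

/-- If multiplication by `1 + z` is similar to the Jordan matrix with block sizes `d`, the rank of
`z ^ k` is the number of positions `(i, j)` with `k ≤ j < d i`. -/
theorem finrank_powRange {F A : Type*} [Field F] [CommRing A] [Algebra F A] (z : A)
    {ι : Type} [Fintype ι] [DecidableEq ι] (d : ι → ℕ) (G : (((i : ι) × Fin (d i)) → F) ≃ₗ[F] A)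
    (hG : ∀ w, G ((jordanBlockDiag F d).mulVec w) = (1 + z) * G w) (k : ℕ) :
    finrank F (powRange F z k) =
      Fintype.card {q : (i : ι) × Fin (d i) // k ≤ (q.2 : ℕ)} := by
  have hG1 : ∀ w, G (blockShift d 1 w) = z * G w := by
    intro w
    have := hG w
    rwa [jordanBlockDiag_mulVec, map_add, add_mul, one_mul, add_right_inj] at this
  have hGk : ∀ w, G (blockShift d k w) = z ^ k * G w := by
    intro w
    induction k with
    | zero =>
      have : blockShift d 0 w = w := by
        ext ⟨i, j⟩
        simp [blockShift]
      rw [this, pow_zero, one_mul]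
    | succ k ih => rw [blockShift_succ, hG1, ih, pow_succ', mul_assoc]
  set f := LinearMap.mulLeft F (z ^ k) ∘ₗ G.toLinearMap
  set ρ := LinearMap.funLeft F F (Subtype.val : {q : (i : ι) × Fin (d i) // k ≤ (q.2 : ℕ)} → _)
  have hρ : LinearMap.range ρ = ⊤ := LinearMap.range_eq_top.2
    (LinearMap.funLeft_surjective_of_injective _ _ _ Subtype.val_injective)
  have hf : LinearMap.range f = powRange F z k := by
    rw [LinearMap.range_comp_of_range_eq_top _ (LinearEquiv.range G)]; rfl
  have hker : LinearMap.ker f = LinearMap.ker ρ := by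
    ext w
    have h1 : w ∈ LinearMap.ker f ↔ blockShift d k w = 0 := by
      rw [LinearMap.mem_ker, ← G.map_eq_zero_iff, hGk]; rfl
    rw [h1, LinearMap.mem_ker]
    constructor
    · intro h
      ext ⟨⟨i, j⟩, hj⟩
      have := congrFun h ⟨i, ⟨j - k, by omega⟩⟩
      simp only [blockShift] at this
      rw [dif_pos (by simp at hj; omega)] at this
      simp only [ρ, LinearMap.funLeft_apply]
      have hjk : (⟨(j : ℕ) - k + k, by simp at hj; omega⟩ : Fin (d i)) = j :=
        Fin.ext (Nat.sub_add_cancel hj)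
      rwa [hjk] at this
    · intro h
      ext ⟨i, j⟩
      simp only [blockShift]
      split_ifs with hj
      · exact congrFun h ⟨⟨i, ⟨j + k, hj⟩⟩, by simp⟩
      · rfl
  have e1 := LinearMap.finrank_range_add_finrank_ker f
  have e2 := LinearMap.finrank_range_add_finrank_ker ρ
  rw [hρ, finrank_top, finrank_fintype_fun_eq_card] at e2
  rw [hf, hker] at e1
  omega

/-- Passing from `k` to `k + 1` loses one position for each block of size greater than `k`. -/
theorem card_positions_succ {ι : Type} [Fintype ι] (d : ι → ℕ) (k : ℕ) :
    Fintype.card {q : (i : ι) × Fin (d i) // k ≤ (q.2 : ℕ)} =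
      Fintype.card {q : (i : ι) × Fin (d i) // k + 1 ≤ (q.2 : ℕ)} +
        Fintype.card {i // k < d i} := by
  classical
  have h : Fintype.card {q : (i : ι) × Fin (d i) // (q.2 : ℕ) = k} = Fintype.card {i // k < d i} :=
    Fintype.card_congr
      { toFun := fun q => ⟨q.1.1, by have := q.1.2.2; have := q.2; omega⟩
        invFun := fun i => ⟨⟨i.1, ⟨k, i.2⟩⟩, rfl⟩
        left_inv := by rintro ⟨⟨i, j⟩, rfl⟩; rfl
        right_inv := fun i => rfl }
  rw [← h]
  simp only [Fintype.card_subtype]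
  rw [← Finset.card_union_of_disjoint]
  · congr 1
    ext q
    simp
    omega
  · rw [Finset.disjoint_filter]
    intro q _ h1 h2
    omega

theorem card_blocks {t : ℕ} (μ m : Fin t → ℕ) (k : ℕ) :
    Fintype.card {x : (i : Fin t) × Fin (m i) // k < μ x.1} =
      ∑ i ∈ Finset.univ.filter (fun i => k < μ i), m i := by
  rw [Fintype.card_subtype, Finset.card_filter, Fintype.sum_sigma, Finset.sum_filter]
  refine Finset.sum_congr rfl fun i _ => ?_
  split_ifs <;> simp

/-! ### The closed formula -/

/-- The relations `μ i + m i + 2 ∑_{j < i} m j = n` are solved for `m` by the alternating sum. -/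
theorem closed_formula {t : ℕ} (μ m : Fin t → ℕ) (n : ℤ)
    (h : ∀ i, (μ i : ℤ) + m i + 2 * ∑ j ∈ Finset.univ.filter (fun j => j < i), (m j : ℤ) = n)
    (i : Fin t) : (m i : ℤ) = (-1) ^ (i : ℕ) * n +
      2 * (∑ j ∈ Finset.univ.filter (fun j => j < i),
        (-1 : ℤ) ^ ((i : ℕ) - (j : ℕ) - 1) * (μ j : ℤ)) - μ i := by
  -- `Fin t`-indexed sums become sums over `Finset.range`, for the induction on `i`
  have hsum : ∀ (φ : ℕ → ℤ) (i : Fin t), ∑ j ∈ Finset.univ.filter (fun j => j < i), φ j =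
      ∑ j ∈ Finset.range i, φ j := by
    intro φ i
    refine Finset.sum_bij (fun j _ => (j : ℕ)) ?_ ?_ ?_ ?_
    · intro j hj; simpa using hj
    · intro j _ j' _ h; exact Fin.ext h
    · intro j hj
      have : j < i := Finset.mem_range.1 hj
      exact ⟨⟨j, by omega⟩, Finset.mem_filter.2 ⟨Finset.mem_univ _, this⟩, rfl⟩
    · intro j _; rfl
  let M : ℕ → ℤ := fun j => if hj : j < t then m ⟨j, hj⟩ else 0
  let N : ℕ → ℤ := fun j => if hj : j < t then μ ⟨j, hj⟩ else 0
  have hM : ∀ j : Fin t, (m j : ℤ) = M j := fun j => by simp [M]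
  have hN : ∀ j : Fin t, (μ j : ℤ) = N j := fun j => by simp [N]
  simp_rw [hM, hN] at h
  simp_rw [hM, hN]
  rw [hsum (fun j => (-1 : ℤ) ^ ((i : ℕ) - j - 1) * N j)]
  have h' : ∀ i, i < t → N i + M i + 2 * ∑ j ∈ Finset.range i, M j = n := by
    intro i hi
    have := h ⟨i, hi⟩
    rwa [hsum] at this
  have key : ∀ i, i < t → n - 2 * ∑ j ∈ Finset.range i, M j =
      (-1) ^ i * n + 2 * ∑ j ∈ Finset.range i, (-1 : ℤ) ^ (i - j - 1) * N j := by
    intro i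
    induction i with
    | zero => simp
    | succ i ih =>
      intro hi
      have h1 := ih (by omega)
      have h2 := h' i (by omega)
      have h3 : ∑ j ∈ Finset.range i, (-1 : ℤ) ^ (i + 1 - j - 1) * N j =
          - ∑ j ∈ Finset.range i, (-1 : ℤ) ^ (i - j - 1) * N j := by
        rw [← Finset.sum_neg_distrib]
        refine Finset.sum_congr rfl fun j hj => ?_
        have := Finset.mem_range.1 hj
        rw [show i + 1 - j - 1 = (i - j - 1) + 1 by omega, pow_succ]
        ring
      rw [Finset.sum_range_succ, Finset.sum_range_succ, h3, pow_succ]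
      simp only [Nat.add_sub_cancel_left, Nat.sub_self, pow_zero]
      linarith
  have h1 := key i i.2
  have h2 := h' i i.2
  linarith



/-- Closed formula `m_i = (−1)^{i−1}(r+s) + 2·Σ_{j=1}^{i−1} (−1)^{i−1−j} μ_j − μ_i`
(indices written 1-based; here `i j : Fin t` are 0-based). -/
theorem stmt_4 {F : Type*} [Field F] (p : ℕ) (hp : p.Prime) [CharP F p]
    (r s : ℕ) (hr : 0 < r) (hs : 0 < s)
    (t : ℕ) (μ : Fin t → ℕ) (m : Fin t → ℕ)
    (hμ : StrictAnti μ) (hμpos : ∀ i, 0 < μ i) (hm : ∀ i, 1 ≤ m i)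
    (hsim : MatSimilar F (jordanBlock F r ⊗ₖ jordanBlock F s)
      (jordanBlockDiag F (fun x : (i : Fin t) × Fin (m i) => μ x.1))) :
    ∀ i : Fin t, (m i : ℤ) = (-1) ^ (i : ℕ) * ((r : ℤ) + s) +
      2 * (∑ j ∈ Finset.univ.filter (fun j => j < i),
        (-1 : ℤ) ^ ((i : ℕ) - (j : ℕ) - 1) * (μ j : ℤ)) - μ i := by
  obtain ⟨A, _, _, x, y, b, hb⟩ := exists_monomialBasis F r s
  have : FiniteDimensional F A := b.finiteDimensional_of_finite
  obtain ⟨E, hE⟩ := exists_kronecker_equiv hb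
  obtain ⟨e, he⟩ := hsim
  have hG : ∀ w, (e.symm.trans E) ((jordanBlockDiag F
      (fun x : (i : Fin t) × Fin (m i) => μ x.1)).mulVec w) =
      (1 + (x + y)) * (e.symm.trans E) w := by
    intro w
    have h1 := he (e.symm w)
    rw [LinearEquiv.apply_symm_apply] at h1
    rw [← h1, LinearEquiv.trans_apply, LinearEquiv.symm_apply_apply, hE]
    rfl
  have hrank : ∀ k, finrank F (powRange F (x + y) k) = finrank F (powRange F (x + y) (k + 1)) +
      ∑ i ∈ Finset.univ.filter (fun i => k < μ i), m i := by
    intro k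
    rw [finrank_powRange _ _ _ hG, finrank_powRange _ _ _ hG, card_positions_succ, card_blocks]
  intro i
  refine closed_formula μ m ((r : ℤ) + s) ?_ i
  intro i
  have hlt : Finset.univ.filter (fun j => μ i < μ j) = Finset.univ.filter (fun j => j < i) := by
    ext j
    simp [hμ.lt_iff_gt]
  have hle : Finset.univ.filter (fun j => μ i - 1 < μ j) =
      insert i (Finset.univ.filter (fun j => j < i)) := by
    ext j
    have h1 : μ i - 1 < μ j ↔ μ i ≤ μ j := by have := hμpos i; omega
    simp [h1, hμ.le_iff_ge, le_iff_eq_or_lt]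
  -- the blocks of size at least `μ i` number `∑_{j ≤ i} m j`, the larger ones `∑_{j < i} m j`
  have h0 := hrank (μ i - 1)
  have h1 := hrank (μ i - 1 + 1)
  rw [hle, Finset.sum_insert (by simp)] at h0
  rw [Nat.sub_add_cancel (hμpos i), hlt] at h1
  have hk := block_size_relation (k := μ i - 1) hr hs hb
    (c := ∑ j ∈ Finset.univ.filter (fun j => j < i), m j)
    (by rw [show μ i - 1 + 2 = μ i + 1 by have := hμpos i; omega,
          Nat.sub_add_cancel (hμpos i)]; exact h1)
    h0 (by have := hm i; omega)
  rw [Nat.sub_add_cancel (hμpos i)] at hk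
  zify at hk
  linarith
end
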